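/- arXiv:1311.3167 — 10 statements merged into one kernel-verified Lean document; each statement's English description precedes it below -/
import Mathlib

section
/- Let t₁, t₂, t₃ be matrices satisfying the su(2) commutation relations, and let Ω = {x ∈ ℝ⁴ : x₄ > 0}. Then the pair A ≡ 0 and φ given by φ_a(x) = x₄⁻¹ · t_a for a = 1,2,3 and φ₄ ≡ 0 satisfies the KW equations on Ω: for all i,j ∈ {1,2,3,4} and all x ∈ Ω, F_{ij}(x) − [φ_i(x), φ_j(x)] + Σ_{k,l} ε_{ijkl} D_k φ_l(x) = 0, and Σ_{i=1}^{4} D_i φ_i(x) = 0. -/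
attribute [local instance] Matrix.normedAddCommGroup Matrix.normedSpace

/-- The Levi-Civita symbol on four indices, with `ε₀₁₂₃ = 1`. -/
noncomputable def eps4 (i j k l : Fin 4) : ℂ :=
  ((((l.val : ℤ) - (k.val : ℤ)) * ((l.val : ℤ) - (j.val : ℤ)) * ((l.val : ℤ) - (i.val : ℤ)) *
      ((k.val : ℤ) - (j.val : ℤ)) * ((k.val : ℤ) - (i.val : ℤ)) *
      ((j.val : ℤ) - (i.val : ℤ)) : ℤ) : ℂ) / 12

/-- Partial derivative in the `i`-th coordinate direction of a matrix-valued function on `ℝ⁴`. -/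
noncomputable def pd4 {n : ℕ} (i : Fin 4) (f : (Fin 4 → ℝ) → Matrix (Fin n) (Fin n) ℂ)
    (x : Fin 4 → ℝ) : Matrix (Fin n) (Fin n) ℂ :=
  deriv (fun t => f (Function.update x i t)) (x i)

/-- The curvature `F_{ij} = ∂_i A_j − ∂_j A_i + [A_i, A_j]`. -/
noncomputable def curv {n : ℕ} (A : (Fin 4 → ℝ) → Fin 4 → Matrix (Fin n) (Fin n) ℂ)
    (i j : Fin 4) (x : Fin 4 → ℝ) : Matrix (Fin n) (Fin n) ℂ :=
  pd4 i (fun x => A x j) x - pd4 j (fun x => A x i) x + (A x i * A x j - A x j * A x i)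

/-- The covariant derivative `D_i φ_j = ∂_i φ_j + [A_i, φ_j]`. -/
noncomputable def covD {n : ℕ} (A φ : (Fin 4 → ℝ) → Fin 4 → Matrix (Fin n) (Fin n) ℂ)
    (i j : Fin 4) (x : Fin 4 → ℝ) : Matrix (Fin n) (Fin n) ℂ :=
  pd4 i (fun x => φ x j) x + (A x i * φ x j - φ x j * A x i)

/-!
For `A = 0` and a Higgs field depending on `x₄` alone, only the derivatives `∂₄` survive, and the
KW equations become `[φ_i, φ_j] = ∑_l ε_{ij4l} φ_l'` together with `φ₄' = 0`. When `φ₄ = 0` the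
remaining system is Nahm's equation `T_a' = -[T_{a+1}, T_{a+2}]` (indices mod 3), which
`T_a = t_a / s` solves because `(1/s)' = -1/s²`. Coordinates are numbered from `0` in the code, so
`x₄` is `x 3`.
-/

/-- The KW equations (at `t = 1`, for the flat Euclidean metric) at the point `x`, for a connection
`A` and a Higgs field `φ`. -/
def SatisfiesKWAt {n : ℕ} (A φ : (Fin 4 → ℝ) → Fin 4 → Matrix (Fin n) (Fin n) ℂ)
    (x : Fin 4 → ℝ) : Prop :=
  (∀ i j, curv A i j x - ⁅φ x i, φ x j⁆ + ∑ k, ∑ l, eps4 i j k l • covD A φ k l x = 0) ∧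
    ∑ i, covD A φ i i x = 0

/-- The Higgs field `(T₁, T₂, T₃, 0)` at a point, built from a triple `T`. -/
def higgsField {M : Type*} [Zero M] (T : Fin 3 → M) : Fin 4 → M :=
  Fin.snoc T 0

/-- Nahm's equations at the time `s` for a triple of matrices `T`, with the orientation that
matches the KW equations. The addition on the index `a : Fin 3` is cyclic. -/
def SatisfiesNahmAt {n : ℕ} (T : ℝ → Fin 3 → Matrix (Fin n) (Fin n) ℂ) (s : ℝ) : Prop :=
  ∀ a, HasDerivAt (fun r => T r a) (-⁅T s (a + 1), T s (a + 2)⁆) s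

section

attribute [local instance] LieRing.ofAssociativeRing

variable {n : ℕ}

-- The norm's instances on matrices agree with those inside `pd4` only up to unfolding, so lemmas on
-- `deriv` and `HasDerivAt` apply by `exact` but not by `simp` or `rw`.
theorem pd4_const (k : Fin 4) (M : Matrix (Fin n) (Fin n) ℂ) (x : Fin 4 → ℝ) :
    pd4 k (fun _ => M) x = 0 :=
  deriv_const _ _

theorem pd4_comp_apply {g : ℝ → Matrix (Fin n) (Fin n) ℂ} {g' : Matrix (Fin n) (Fin n) ℂ}
    {m : Fin 4} {x : Fin 4 → ℝ} (hg : HasDerivAt g g' (x m)) (k : Fin 4) :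
    pd4 k (fun y => g (y m)) x = if k = m then g' else 0 := by
  rcases eq_or_ne k m with rfl | hkm
  · simp only [pd4, Function.update_self, if_true]
    exact hg.deriv
  · simp only [pd4, Function.update_of_ne hkm.symm, if_neg hkm]
    exact deriv_const _ _

theorem curv_zero (i j : Fin 4) (x : Fin 4 → ℝ) :
    curv (0 : (Fin 4 → ℝ) → Fin 4 → Matrix (Fin n) (Fin n) ℂ) i j x = 0 := by
  simp [curv, pd4_const]

theorem covD_zero (φ : (Fin 4 → ℝ) → Fin 4 → Matrix (Fin n) (Fin n) ℂ) (i j : Fin 4)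
    (x : Fin 4 → ℝ) : covD 0 φ i j x = pd4 i (fun y => φ y j) x := by
  simp [covD]

theorem satisfiesKWAt_zero_comp_iff {G : ℝ → Fin 4 → Matrix (Fin n) (Fin n) ℂ}
    {G' : Fin 4 → Matrix (Fin n) (Fin n) ℂ} {x : Fin 4 → ℝ}
    (hG : ∀ l, HasDerivAt (fun s => G s l) (G' l) (x 3)) :
    SatisfiesKWAt 0 (fun y => G (y 3)) x ↔
      (∀ i j, ⁅G (x 3) i, G (x 3) j⁆ = ∑ l, eps4 i j 3 l • G' l) ∧ G' 3 = 0 := by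
  have hcovD (k l : Fin 4) : covD 0 (fun y => G (y 3)) k l x = if k = 3 then G' l else 0 := by
    rw [covD_zero, pd4_comp_apply (hG l)]
  have hsum (i j : Fin 4) : ∑ k, ∑ l, eps4 i j k l • covD 0 (fun y => G (y 3)) k l x =
      ∑ l, eps4 i j 3 l • G' l := by
    rw [Finset.sum_comm]
    simp only [hcovD, smul_ite, smul_zero, Finset.sum_ite_eq', Finset.mem_univ, if_true]
  simp only [SatisfiesKWAt, curv_zero, hsum, zero_sub, neg_add_eq_zero]
  simp only [hcovD, Finset.sum_ite_eq', Finset.mem_univ, if_true]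

theorem eps4_eq_zero_of_first_eq_third (j k l : Fin 4) : eps4 k j k l = 0 := by
  simp [eps4]

theorem eps4_eq_zero_of_second_eq_third (i k l : Fin 4) : eps4 i k k l = 0 := by
  simp [eps4]

theorem higgsField_castSucc {M : Type*} [Zero M] (T : Fin 3 → M) (a : Fin 3) :
    higgsField T a.castSucc = T a :=
  Fin.snoc_castSucc (α := fun _ => M) _ _ _

theorem higgsField_three {M : Type*} [Zero M] (T : Fin 3 → M) : higgsField T 3 = 0 :=
  Fin.snoc_last (α := fun _ => M) _ _

/-- With `ε_{abc} = -ε_{ab4c}`, this is `[T_a, T_b] = ½ ∑_{c,d,e} ε_{abc} ε_{cde} [T_d, T_e]`. -/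
theorem lie_eq_sum_eps4_smul_neg_lie {L : Type*} [LieRing L] [Module ℂ L] (T : Fin 3 → L)
    (a b : Fin 3) :
    ⁅T a, T b⁆ = ∑ c : Fin 3, eps4 a.castSucc b.castSucc 3 c.castSucc •
      -⁅T (c + 1), T (c + 2)⁆ := by
  fin_cases a <;> fin_cases b <;> norm_num [eps4, Fin.sum_univ_three, lie_skew] <;> rfl

theorem lie_higgsField_eq_sum_eps4_smul {L : Type*} [LieRing L] [Module ℂ L] (T : Fin 3 → L)
    (i j : Fin 4) :
    ⁅higgsField T i, higgsField T j⁆ =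
      ∑ l, eps4 i j 3 l • higgsField (fun a => -⁅T (a + 1), T (a + 2)⁆) l := by
  cases i using Fin.lastCases with
  | last => simp [higgsField_three, eps4_eq_zero_of_first_eq_third]
  | cast a =>
    cases j using Fin.lastCases with
    | last => simp [higgsField_three, eps4_eq_zero_of_second_eq_third]
    | cast b =>
      simp only [Fin.sum_univ_castSucc (n := 3), higgsField_castSucc, Fin.reduceLast,
        higgsField_three, smul_zero, add_zero]
      exact lie_eq_sum_eps4_smul_neg_lie T a b

theorem hasDerivAt_higgsField {T : ℝ → Fin 3 → Matrix (Fin n) (Fin n) ℂ}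
    {T' : Fin 3 → Matrix (Fin n) (Fin n) ℂ} {s : ℝ}
    (hT : ∀ a, HasDerivAt (fun r => T r a) (T' a) s) (l : Fin 4) :
    HasDerivAt (fun r => higgsField (T r) l) (higgsField T' l) s := by
  cases l using Fin.lastCases with
  | last => exact hasDerivAt_const _ _
  | cast a => simpa only [higgsField_castSucc] using hT a

theorem SatisfiesNahmAt.satisfiesKWAt {T : ℝ → Fin 3 → Matrix (Fin n) (Fin n) ℂ}
    {x : Fin 4 → ℝ} (hT : SatisfiesNahmAt T (x 3)) :
    SatisfiesKWAt 0 (fun y => higgsField (T (y 3))) x :=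
  (satisfiesKWAt_zero_comp_iff (hasDerivAt_higgsField hT)).2
    ⟨lie_higgsField_eq_sum_eps4_smul (T (x 3)), higgsField_three _⟩

theorem satisfiesNahmAt_inv_smul {t : Fin 3 → Matrix (Fin n) (Fin n) ℂ}
    (ht : ∀ a, ⁅t (a + 1), t (a + 2)⁆ = t a) {s : ℝ} (hs : s ≠ 0) :
    SatisfiesNahmAt (fun r a => (r : ℂ)⁻¹ • t a) s := by
  intro a
  have hinv : HasDerivAt (fun r : ℝ => (r : ℂ)⁻¹) (-((s : ℂ) ^ 2)⁻¹) s :=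
    (hasDerivAt_inv (Complex.ofReal_ne_zero.mpr hs)).comp_ofReal
  refine (hinv.smul_const (t a)).congr_deriv ?_
  simp only [smul_lie, lie_smul, ht, smul_smul, neg_smul, sq, mul_inv]

end

theorem nahm_pole_solves_KW_general {n : ℕ} (t : Fin 3 → Matrix (Fin n) (Fin n) ℂ)
    (h12 : t 0 * t 1 - t 1 * t 0 = t 2)
    (h23 : t 1 * t 2 - t 2 * t 1 = t 0)
    (h31 : t 2 * t 0 - t 0 * t 2 = t 1)
    (A φ : (Fin 4 → ℝ) → Fin 4 → Matrix (Fin n) (Fin n) ℂ)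
    (hA : ∀ x i, A x i = 0)
    (hφ : ∀ x i, φ x i = if h : (i : ℕ) < 3 then ((x 3 : ℂ))⁻¹ • t ⟨i, h⟩ else 0)
    {x : Fin 4 → ℝ} (hx : x 3 ≠ 0) : SatisfiesKWAt A φ x := by
  have ht : ∀ a, ⁅t (a + 1), t (a + 2)⁆ = t a := by
    intro a
    fin_cases a
    exacts [h23, h31, h12]
  obtain rfl : A = 0 := funext₂ hA
  obtain rfl : φ = fun y => higgsField fun a => (y 3 : ℂ)⁻¹ • t a := funext₂ hφ
  exact (satisfiesNahmAt_inv_smul ht hx).satisfiesKWAt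

/-- The Nahm pole solution `A = 0`, `φ_a = t_a/x₄` (a = 1,2,3), `φ₄ = 0` satisfies the
KW equations on the half-space `x₄ > 0`. -/
theorem nahm_pole_solves_KW {n : ℕ} (t : Fin 3 → Matrix (Fin n) (Fin n) ℂ)
    (h12 : t 0 * t 1 - t 1 * t 0 = t 2)
    (h23 : t 1 * t 2 - t 2 * t 1 = t 0)
    (h31 : t 2 * t 0 - t 0 * t 2 = t 1)
    (A φ : (Fin 4 → ℝ) → Fin 4 → Matrix (Fin n) (Fin n) ℂ)
    (hA : ∀ x i, A x i = 0)
    (hφ : ∀ x i, φ x i = if h : (i : ℕ) < 3 then ((x 3 : ℂ))⁻¹ • t ⟨i, h⟩ else 0) :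
    ∀ x : Fin 4 → ℝ, 0 < x 3 →
      (∀ i j : Fin 4,
        curv A i j x - (φ x i * φ x j - φ x j * φ x i)
          + ∑ k, ∑ l, eps4 i j k l • covD A φ k l x = 0)
      ∧ ∑ i, covD A φ i i x = 0 :=
  fun _ hx => nahm_pole_solves_KW_general t h12 h23 h31 A φ hA hφ hx.ne'
end

section
/- Let I ⊆ ℝ be open and let φ₁, φ₂, φ₃, A_y : I → Matrix (Fin n) (Fin n) ℂ be differentiable. Set D_yφ_a := φ_a′ + [A_y, φ_a] and W_a := D_yφ_a + (1/2) Σ_{b,c} ε_{abc} [φ_b, φ_c]. Then at every point of I: Σ_{a=1}^{3} tr((D_yφ_a)²) + (1/2) Σ_{a,b=1}^{3} tr([φ_a,φ_b]²) = Σ_{a=1}^{3} tr(W_a²) − (1/3) · d/dy ( Σ_{a,b,c=1}^{3} ε_{abc} tr(φ_a [φ_b, φ_c]) ). (This is the Weitzenbock-type rearrangement adapted to the Nahm pole: the cubic boundary term is exactly a total derivative.) -/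
attribute [local instance] Matrix.normedAddCommGroup Matrix.normedSpace

/-- The Levi-Civita symbol on three indices, with `ε₀₁₂ = 1`. -/
noncomputable def eps3 (a b c : Fin 3) : ℂ :=
  ((((c.val : ℤ) - (b.val : ℤ)) * ((c.val : ℤ) - (a.val : ℤ)) *
      ((b.val : ℤ) - (a.val : ℤ)) : ℤ) : ℂ) / 2

/-- The covariant `y`-derivative `D_yφ_a = φ_a' + [A_y, φ_a]`. -/
noncomputable def Dy {n : ℕ} (Ay : ℝ → Matrix (Fin n) (Fin n) ℂ)
    (φ : Fin 3 → ℝ → Matrix (Fin n) (Fin n) ℂ) (a : Fin 3) (y : ℝ) :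
    Matrix (Fin n) (Fin n) ℂ :=
  deriv (φ a) y + (Ay y * φ a y - φ a y * Ay y)

/-- `W_a = D_yφ_a + (1/2) Σ_{b,c} ε_{abc} [φ_b, φ_c]`. -/
noncomputable def Wop {n : ℕ} (Ay : ℝ → Matrix (Fin n) (Fin n) ℂ)
    (φ : Fin 3 → ℝ → Matrix (Fin n) (Fin n) ℂ) (a : Fin 3) (y : ℝ) :
    Matrix (Fin n) (Fin n) ℂ :=
  Dy Ay φ a y + (1 / 2 : ℂ) • ∑ b, ∑ c, eps3 a b c • (φ b y * φ c y - φ c y * φ b y)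

/-!
Completing the square: `W_a = D_a + B_a`, where `B_a = [φ_{a+1}, φ_{a+2}]` with indices modulo 3, so
`∑ tr W_a² = ∑ tr D_a² + 2 ∑ tr (D_a B_a) + ∑ tr B_a²`. The last sum is the quartic term. The cubic
form `∑ ε_{abc} tr (φ_a [φ_b, φ_c])` equals `6 tr (φ_0 [φ_1, φ_2])`, with derivative
`6 ∑ tr (φ_a' B_a)`; as the cubic form is invariant under conjugation, `φ_a'` may be replaced here
by the covariant derivative `D_a`.
-/

open Matrix

theorem neg_ring_lie {R : Type*} [NonUnitalNonAssocRing R] (x y : R) : -⁅x, y⁆ = ⁅y, x⁆ :=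
  neg_sub _ _

section Trace

variable {m R : Type*} [Fintype m] [CommRing R]

theorem trace_lie_mul (X Y Z : Matrix m m R) : (⁅X, Y⁆ * Z).trace = (X * ⁅Y, Z⁆).trace := by
  simp only [Ring.lie_def, sub_mul, mul_sub, trace_sub, ← mul_assoc]
  rw [trace_mul_cycle Y X Z, trace_mul_cycle Z Y X]

theorem trace_mul_lie_rotate (X Y Z : Matrix m m R) :
    (X * ⁅Y, Z⁆).trace = (Y * ⁅Z, X⁆).trace := by
  rw [trace_mul_comm, trace_lie_mul]

theorem trace_mul_lie_swap (X Y Z : Matrix m m R) :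
    (X * ⁅Z, Y⁆).trace = -(X * ⁅Y, Z⁆).trace := by
  rw [← neg_ring_lie, mul_neg, trace_neg]

theorem trace_add_mul_self (X Y : Matrix m m R) :
    ((X + Y) * (X + Y)).trace = (X * X).trace + 2 * (X * Y).trace + (Y * Y).trace := by
  simp only [mul_add, add_mul, trace_add, trace_mul_comm Y X]
  ring

theorem sum_trace_lie_mul_lie_eq_zero (A : Matrix m m R) (X : Fin 3 → Matrix m m R) :
    ∑ a, (⁅A, X a⁆ * ⁅X (a + 1), X (a + 2)⁆).trace = 0 := by
  have jacobi : ∑ a, ⁅X a, ⁅X (a + 1), X (a + 2)⁆⁆ = 0 := by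
    simp only [Fin.sum_univ_three, Fin.reduceAdd, zero_add, Ring.lie_def]
    noncomm_ring
  simp only [trace_lie_mul, ← trace_sum, ← Finset.mul_sum, jacobi, mul_zero, trace_zero]

theorem sum_trace_lie_mul_self (X : Fin 3 → Matrix m m R) :
    ∑ a, ∑ b, (⁅X a, X b⁆ * ⁅X a, X b⁆).trace =
      2 * ∑ a, (⁅X (a + 1), X (a + 2)⁆ * ⁅X (a + 1), X (a + 2)⁆).trace := by
  have symm (a b : Fin 3) :
      (⁅X a, X b⁆ * ⁅X a, X b⁆).trace = (⁅X b, X a⁆ * ⁅X b, X a⁆).trace := by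
    rw [← neg_ring_lie, neg_mul_neg]
  have self (a : Fin 3) : (⁅X a, X a⁆ * ⁅X a, X a⁆).trace = 0 := by
    rw [Ring.lie_def, sub_self, mul_zero, trace_zero]
  simp only [Fin.sum_univ_three, self, symm 1 0, symm 2 1, symm 0 2, zero_add,
    Fin.reduceAdd]
  ring

end Trace

section LeviCivita

theorem eps3_eq_sub_ite (a b c : Fin 3) :
    eps3 a b c =
      (if b = a + 1 ∧ c = a + 2 then 1 else 0) - (if b = a + 2 ∧ c = a + 1 then 1 else 0) := by
  have vandermonde : ∀ a b c : Fin 3,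
      ((c.val : ℤ) - (b.val : ℤ)) * ((c.val : ℤ) - (a.val : ℤ)) * ((b.val : ℤ) - (a.val : ℤ)) =
        2 * ((if b = a + 1 ∧ c = a + 2 then 1 else 0) -
          (if b = a + 2 ∧ c = a + 1 then 1 else 0)) := by
    decide
  rw [eps3, vandermonde]
  push_cast
  ring

theorem sum_eps3_smul {M : Type*} [AddCommGroup M] [Module ℂ M] (F : Fin 3 → Fin 3 → M)
    (a : Fin 3) :
    ∑ b, ∑ c, eps3 a b c • F b c = F (a + 1) (a + 2) - F (a + 2) (a + 1) := by
  simp only [eps3_eq_sub_ite, ite_and, sub_smul, ite_smul, one_smul, zero_smul,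
    Finset.sum_sub_distrib, Finset.sum_ite_irrel, Finset.sum_const_zero, Finset.sum_ite_eq',
    Finset.mem_univ, if_true]

theorem half_smul_sum_eps3_smul_lie {R : Type*} [NonUnitalNonAssocRing R] [Module ℂ R]
    (X : Fin 3 → R) (a : Fin 3) :
    (1 / 2 : ℂ) • ∑ b, ∑ c, eps3 a b c • ⁅X b, X c⁆ = ⁅X (a + 1), X (a + 2)⁆ := by
  rw [sum_eps3_smul fun b c => ⁅X b, X c⁆, ← neg_ring_lie (X (a + 1)) (X (a + 2))]
  module

theorem sum_eps3_mul_trace_mul_lie {m : Type*} [Fintype m] (X : Fin 3 → Matrix m m ℂ) :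
    ∑ a, ∑ b, ∑ c, eps3 a b c * (X a * ⁅X b, X c⁆).trace = 6 * (X 0 * ⁅X 1, X 2⁆).trace := by
  have contract (a : Fin 3) : ∑ b, ∑ c, eps3 a b c * (X a * ⁅X b, X c⁆).trace =
      2 * (X a * ⁅X (a + 1), X (a + 2)⁆).trace := by
    simp only [← smul_eq_mul (a := eps3 _ _ _)]
    rw [sum_eps3_smul fun b c => (X a * ⁅X b, X c⁆).trace, trace_mul_lie_swap]
    ring
  rw [Fin.sum_univ_three, contract, contract, contract]
  simp only [Fin.reduceAdd, zero_add]
  rw [← trace_mul_lie_rotate (X 0) (X 1) (X 2), trace_mul_lie_rotate (X 2) (X 0) (X 1)]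
  ring

end LeviCivita

section Derivative

variable {𝕜 : Type*} [NontriviallyNormedField 𝕜] {y : 𝕜}

theorem hasDerivAt_matrix {m n E : Type*} [Finite m] [Finite n] [NormedAddCommGroup E]
    [NormedSpace 𝕜 E] {f : 𝕜 → Matrix m n E} {f' : Matrix m n E} :
    HasDerivAt f f' y ↔ ∀ i j, HasDerivAt (fun t => f t i j) (f' i j) y := by
  cases nonempty_fintype m
  cases nonempty_fintype n
  exact hasDerivAt_pi.trans (forall_congr' fun _ => hasDerivAt_pi)

theorem hasDerivAt_matrix_trace {m E : Type*} [Fintype m] [NormedAddCommGroup E]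
    [NormedSpace 𝕜 E] {f : 𝕜 → Matrix m m E} {f' : Matrix m m E} (hf : HasDerivAt f f' y) :
    HasDerivAt (fun t => (f t).trace) f'.trace y :=
  HasDerivAt.fun_sum fun i _ => hasDerivAt_matrix.1 hf i i

theorem hasDerivAt_matrix_mul {l m n R : Type*} [Finite l] [Fintype m] [Finite n]
    [NormedRing R] [NormedAlgebra 𝕜 R] {f : 𝕜 → Matrix l m R} {g : 𝕜 → Matrix m n R}
    {f' : Matrix l m R} {g' : Matrix m n R} (hf : HasDerivAt f f' y) (hg : HasDerivAt g g' y) :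
    HasDerivAt (fun t => f t * g t) (f' * g y + f y * g') y := by
  refine hasDerivAt_matrix.2 fun i j => ?_
  simp only [Matrix.add_apply, Matrix.mul_apply, ← Finset.sum_add_distrib]
  exact HasDerivAt.fun_sum fun k _ => (hasDerivAt_matrix.1 hf i k).mul (hasDerivAt_matrix.1 hg k j)

theorem hasDerivAt_matrix_lie {m R : Type*} [Fintype m] [NormedRing R] [NormedAlgebra 𝕜 R]
    {f g : 𝕜 → Matrix m m R} {f' g' : Matrix m m R} (hf : HasDerivAt f f' y)
    (hg : HasDerivAt g g' y) :
    HasDerivAt (fun t => ⁅f t, g t⁆) (⁅f', g y⁆ + ⁅f y, g'⁆) y := by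
  refine ((hasDerivAt_matrix_mul hf hg).fun_sub (hasDerivAt_matrix_mul hg hf)).congr_deriv ?_
  simp only [Ring.lie_def]
  abel

variable {m R : Type*} [Fintype m] [NormedCommRing R] [NormedAlgebra 𝕜 R]
  {φ : Fin 3 → 𝕜 → Matrix m m R} {φ' : Fin 3 → Matrix m m R}

theorem hasDerivAt_trace_mul_lie (hφ : ∀ a, HasDerivAt (φ a) (φ' a) y) :
    HasDerivAt (fun t => (φ 0 t * ⁅φ 1 t, φ 2 t⁆).trace)
      (∑ a, (φ' a * ⁅φ (a + 1) y, φ (a + 2) y⁆).trace) y := by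
  have product := hasDerivAt_matrix_mul (hφ 0) (hasDerivAt_matrix_lie (hφ 1) (hφ 2))
  refine (hasDerivAt_matrix_trace product).congr_deriv ?_
  simp only [Fin.sum_univ_three, Fin.reduceAdd, zero_add, mul_add, trace_add]
  rw [trace_mul_lie_rotate (φ 0 y) (φ' 1), ← trace_mul_lie_rotate (φ' 2) (φ 0 y), add_assoc]

theorem hasDerivAt_trace_mul_lie_covariant (A : Matrix m m R)
    (hφ : ∀ a, HasDerivAt (φ a) (φ' a) y) :
    HasDerivAt (fun t => (φ 0 t * ⁅φ 1 t, φ 2 t⁆).trace)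
      (∑ a, ((φ' a + ⁅A, φ a y⁆) * ⁅φ (a + 1) y, φ (a + 2) y⁆).trace) y := by
  simpa only [add_mul, trace_add, Finset.sum_add_distrib,
    sum_trace_lie_mul_lie_eq_zero A fun a => φ a y, add_zero] using hasDerivAt_trace_mul_lie hφ

end Derivative

theorem weitzenbock_rearrangement_general {𝕜 : Type*} [NontriviallyNormedField 𝕜]
    [NormedAlgebra 𝕜 ℂ] {m : Type*} [Fintype m] {φ : Fin 3 → 𝕜 → Matrix m m ℂ}
    {φ' : Fin 3 → Matrix m m ℂ} {y : 𝕜} (A : Matrix m m ℂ)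
    (hφ : ∀ a, HasDerivAt (φ a) (φ' a) y) :
    (∑ a, ((φ' a + ⁅A, φ a y⁆) * (φ' a + ⁅A, φ a y⁆)).trace)
        + (1 / 2 : ℂ) * ∑ a, ∑ b, (⁅φ a y, φ b y⁆ * ⁅φ a y, φ b y⁆).trace
      = (∑ a, ((φ' a + ⁅A, φ a y⁆ + (1 / 2 : ℂ) • ∑ b, ∑ c, eps3 a b c • ⁅φ b y, φ c y⁆) *
          (φ' a + ⁅A, φ a y⁆ + (1 / 2 : ℂ) • ∑ b, ∑ c, eps3 a b c • ⁅φ b y, φ c y⁆)).trace)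
        - (1 / 3 : ℂ) * deriv (fun t => ∑ a, ∑ b, ∑ c,
            eps3 a b c * (φ a t * ⁅φ b t, φ c t⁆).trace) y := by
  have cubic_deriv : deriv (fun t => ∑ a, ∑ b, ∑ c,
      eps3 a b c * (φ a t * ⁅φ b t, φ c t⁆).trace) y =
      6 * ∑ a, ((φ' a + ⁅A, φ a y⁆) * ⁅φ (a + 1) y, φ (a + 2) y⁆).trace := by
    simp only [sum_eps3_mul_trace_mul_lie fun a => φ a _]
    exact ((hasDerivAt_trace_mul_lie_covariant A hφ).const_mul 6).deriv
  rw [cubic_deriv, sum_trace_lie_mul_self fun a => φ a y]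
  simp only [half_smul_sum_eps3_smul_lie fun a => φ a y, trace_add_mul_self,
    Finset.sum_add_distrib, ← Finset.mul_sum]
  ring

/-- The Weitzenbock-type rearrangement adapted to the Nahm pole: the difference between
`Σ tr((D_yφ_a)²) + (1/2) Σ tr([φ_a,φ_b]²)` and `Σ tr(W_a²)` is exactly a total derivative
of the cubic term `−(1/3) Σ ε_{abc} tr(φ_a[φ_b,φ_c])`. -/
theorem weitzenbock_rearrangement {n : ℕ} (I : Set ℝ) (hI : IsOpen I)
    (φ : Fin 3 → ℝ → Matrix (Fin n) (Fin n) ℂ) (Ay : ℝ → Matrix (Fin n) (Fin n) ℂ)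
    (hφ : ∀ a, ∀ y ∈ I, DifferentiableAt ℝ (φ a) y)
    (hA : ∀ y ∈ I, DifferentiableAt ℝ Ay y) :
    ∀ y ∈ I,
      (∑ a, Matrix.trace (Dy Ay φ a y * Dy Ay φ a y))
        + (1 / 2 : ℂ) * ∑ a, ∑ b,
            Matrix.trace ((φ a y * φ b y - φ b y * φ a y) *
              (φ a y * φ b y - φ b y * φ a y))
      = (∑ a, Matrix.trace (Wop Ay φ a y * Wop Ay φ a y))
        - (1 / 3 : ℂ) * deriv (fun y => ∑ a, ∑ b, ∑ c,
            eps3 a b c * Matrix.trace (φ a y * (φ b y * φ c y - φ c y * φ b y))) y :=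
  fun y hy => weitzenbock_rearrangement_general (Ay y) fun a => (hφ a y hy).hasDerivAt
end

section
/- Assume the su(2) endomorphism triple setup with Casimir parameter j, where V is finite-dimensional over ℂ and j is a real number with j ≥ 0 and 2j ∈ ℤ. Define the ℂ-linear endomorphism St of V³ = (Fin 3 → V) by (St a)_a = Σ_{b,c} ε_{abc} T_b(a_c). Then (St + j·id) ∘ (St − id) ∘ (St − (j+1)·id) = 0; in particular every eigenvalue of St lies in {−j, 1, j+1}. -/
/-- The operator `𝔰·𝔱` on `V³`: `(St a)_a = Σ_{b,c} ε_{abc} T_b(a_c)`. -/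
noncomputable def St {V : Type*} [AddCommGroup V] [Module ℂ V]
    (T : Fin 3 → Module.End ℂ V) : Module.End ℂ (Fin 3 → V) :=
  LinearMap.pi fun a => ∑ b, ∑ c, eps3 a b c • ((T b) ∘ₗ (LinearMap.proj c))

/-!
Over the endomorphism algebra of `V`, `St T` is the matrix `S` of the cross product `T ×`. For any
`T`, the expansion of an iterated cross product reads `S² = (T_j T_i)_{ij} - (T · T)`, and the
commutation relations turn `T_j T_i` into `T_i T_j + S_{ij}`. Hence `S² - S + T · T` is the
rank-one matrix `T Tᵀ`. The same relations say `T × T = T`, so `S - 1` kills this matrix, and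
`(S - 1) (S² - S - j (j + 1)) = 0` once `T · T = -j (j + 1)`.
-/

open Matrix Polynomial

/-- The matrix of the cross product `v ↦ T × v`, for a vector `T` with entries in a ring that need
not be commutative. -/
def crossMatrix {A : Type*} [Ring A] (T : Fin 3 → A) : Matrix (Fin 3) (Fin 3) A :=
  !![0, -T 2, T 1; T 2, 0, -T 0; -T 1, T 0, 0]

/-- The relations `[T₁, T₂] = T₃`, `[T₂, T₃] = T₁`, `[T₃, T₁] = T₂` of the standard basis of
`su(2)`, with indices shifted to start from `0`. Unlike in `IsSl2Triple`, the zero triple is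
allowed. -/
structure IsSu2Triple {A : Type*} [Ring A] (T : Fin 3 → A) : Prop where
  comm_zero_one : T 0 * T 1 - T 1 * T 0 = T 2
  comm_one_two : T 1 * T 2 - T 2 * T 1 = T 0
  comm_two_zero : T 2 * T 0 - T 0 * T 2 = T 1

theorem crossMatrix_sq {A : Type*} [Ring A] (T : Fin 3 → A) :
    crossMatrix T ^ 2 = of (fun i j => T j * T i) - scalar (Fin 3) (T ⬝ᵥ T) := by
  ext i j
  fin_cases i <;> fin_cases j <;>
    simp [crossMatrix, sq, mul_apply, dotProduct, Fin.sum_univ_three] <;> abel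

namespace IsSu2Triple

section Ring

variable {A : Type*} [Ring A] {T : Fin 3 → A}

theorem crossMatrix_mulVec_self (hT : IsSu2Triple T) : crossMatrix T *ᵥ T = T := by
  ext i
  fin_cases i
  · simpa [crossMatrix, mulVec, dotProduct, Fin.sum_univ_three, neg_add_eq_sub]
      using hT.comm_one_two
  · simpa [crossMatrix, mulVec, dotProduct, Fin.sum_univ_three, ← sub_eq_add_neg]
      using hT.comm_two_zero
  · simpa [crossMatrix, mulVec, dotProduct, Fin.sum_univ_three, neg_add_eq_sub]
      using hT.comm_zero_one

theorem of_swap_mul_eq_vecMulVec_add_crossMatrix (hT : IsSu2Triple T) :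
    of (fun i j => T j * T i) = vecMulVec T T + crossMatrix T := by
  ext i j
  fin_cases i <;> fin_cases j <;>
    simp only [Fin.zero_eta, Fin.mk_one, Fin.reduceFinMk, of_apply, Matrix.add_apply,
      vecMulVec_apply, crossMatrix, cons_val] <;>
    grind [hT.comm_zero_one, hT.comm_one_two, hT.comm_two_zero]

theorem crossMatrix_sq_sub_self_add_scalar (hT : IsSu2Triple T) :
    crossMatrix T ^ 2 - crossMatrix T + scalar (Fin 3) (T ⬝ᵥ T) = vecMulVec T T := by
  rw [crossMatrix_sq, hT.of_swap_mul_eq_vecMulVec_add_crossMatrix]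
  abel

theorem crossMatrix_sub_one_mul_eq_zero (hT : IsSu2Triple T) :
    (crossMatrix T - 1) *
      (crossMatrix T ^ 2 - crossMatrix T + scalar (Fin 3) (T ⬝ᵥ T)) = 0 := by
  rw [hT.crossMatrix_sq_sub_self_add_scalar, mul_vecMulVec, sub_mulVec, hT.crossMatrix_mulVec_self,
    one_mulVec, sub_self, zero_vecMulVec]

end Ring

theorem aeval_crossMatrix_eq_zero {R A : Type*} [CommRing R] [Ring A] [Algebra R A]
    {T : Fin 3 → A} (hT : IsSu2Triple T) {j : R}
    (hcas : T ⬝ᵥ T = algebraMap R A (-(j * (j + 1)))) :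
    aeval (crossMatrix T) ((X + C j) * (X - 1) * (X - C (j + 1))) = 0 := by
  have hfactor : (X + C j) * (X - 1) * (X - C (j + 1))
      = (X - 1) * (X ^ 2 - X + C (-(j * (j + 1)))) := by
    simp only [map_neg, map_mul, map_add, map_one]
    ring
  have hscalar : scalar (Fin 3) (T ⬝ᵥ T) =
      algebraMap R (Matrix (Fin 3) (Fin 3) A) (-(j * (j + 1))) := by
    rw [hcas, algebraMap_eq_diagonal, scalar_apply, Pi.algebraMap_def]
  rw [hfactor]
  simpa only [map_mul (aeval _), map_sub (aeval _), map_add (aeval _), map_pow, map_one, aeval_X,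
    aeval_C, hscalar] using hT.crossMatrix_sub_one_mul_eq_zero

end IsSu2Triple

theorem crossMatrix_apply_eq_sum_eps3 {A : Type*} [Ring A] [Algebra ℂ A] (T : Fin 3 → A)
    (a c : Fin 3) : crossMatrix T a c = ∑ b, eps3 a b c • T b := by
  fin_cases a <;> fin_cases c <;>
    norm_num [crossMatrix, eps3, Fin.sum_univ_three]

theorem endVecAlgEquivMatrixEnd_St {V : Type*} [AddCommGroup V] [Module ℂ V]
    (T : Fin 3 → Module.End ℂ V) :
    endVecAlgEquivMatrixEnd (Fin 3) ℂ ℂ V (St T) = crossMatrix T := by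
  ext a c v
  change St T (Pi.single c v) a = crossMatrix T a c v
  simp [St, crossMatrix_apply_eq_sum_eps3, Pi.single_apply, apply_ite]

theorem IsSu2Triple.aeval_St_eq_zero {V : Type*} [AddCommGroup V] [Module ℂ V]
    {T : Fin 3 → Module.End ℂ V} (hT : IsSu2Triple T) {j : ℂ}
    (hcas : T ⬝ᵥ T = algebraMap ℂ (Module.End ℂ V) (-(j * (j + 1)))) :
    aeval (St T) ((X + C j) * (X - 1) * (X - C (j + 1))) = 0 := by
  apply (endVecAlgEquivMatrixEnd (Fin 3) ℂ ℂ V).injective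
  rw [map_zero, ← aeval_algHom_apply, endVecAlgEquivMatrixEnd_St]
  exact hT.aeval_crossMatrix_eq_zero hcas

theorem isRoot_of_hasEigenvalue_of_aeval_eq_zero {R M : Type*} [CommRing R] [IsDomain R]
    [AddCommGroup M] [Module R M] [Module.IsTorsionFree R M] {f : Module.End R M} {p : R[X]}
    (hp : aeval f p = 0) {μ : R} (hμ : f.HasEigenvalue μ) : p.IsRoot μ := by
  obtain ⟨v, hv⟩ := hμ.exists_hasEigenvector
  have hpv : p.eval μ • v = 0 := by
    rw [← Module.End.aeval_apply_of_hasEigenvector hv, hp, LinearMap.zero_apply]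
  exact (smul_eq_zero.mp hpv).resolve_right hv.2

theorem St_cubic_annihilated_general {V : Type*} [AddCommGroup V] [Module ℂ V]
    {T : Fin 3 → Module.End ℂ V} (hT : IsSu2Triple T) {j : ℂ}
    (hcas : T 0 ^ 2 + T 1 ^ 2 + T 2 ^ 2 = -(j * (j + 1)) • (1 : Module.End ℂ V)) :
    (St T + j • (1 : Module.End ℂ (Fin 3 → V)))
        * (St T - 1)
        * (St T - (j + 1) • (1 : Module.End ℂ (Fin 3 → V))) = 0
    ∧ ∀ μ : ℂ, Module.End.HasEigenvalue (St T) μ → μ = -j ∨ μ = 1 ∨ μ = j + 1 := by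
  have hdot : T ⬝ᵥ T = algebraMap ℂ (Module.End ℂ V) (-(j * (j + 1))) := by
    rw [Algebra.algebraMap_eq_smul_one, ← hcas]
    simp only [dotProduct, Fin.sum_univ_three, sq]
  have hcubic := hT.aeval_St_eq_zero hdot
  refine ⟨?_, fun μ hμ => ?_⟩
  · simpa only [map_mul, map_add, map_sub, map_one, aeval_X, aeval_C,
      Algebra.algebraMap_eq_smul_one, add_smul, one_smul] using hcubic
  · have hroot := isRoot_of_hasEigenvalue_of_aeval_eq_zero hcubic hμ
    simpa only [IsRoot.def, eval_mul, eval_add, eval_sub, eval_X, eval_C, eval_one, mul_eq_zero,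
      add_eq_zero_iff_eq_neg, sub_eq_zero, or_assoc] using hroot

/-- For an su(2) endomorphism triple with Casimir parameter `j` (with `j ≥ 0`, `2j ∈ ℤ`)
on a finite-dimensional complex vector space, the operator `St` satisfies
`(St + j)(St − 1)(St − (j+1)) = 0`; in particular every eigenvalue of `St` lies in
`{−j, 1, j+1}`. -/
theorem St_cubic_annihilated {V : Type*} [AddCommGroup V] [Module ℂ V]
    [FiniteDimensional ℂ V]
    (T : Fin 3 → Module.End ℂ V)
    (h12 : T 0 * T 1 - T 1 * T 0 = T 2)
    (h23 : T 1 * T 2 - T 2 * T 1 = T 0)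
    (h31 : T 2 * T 0 - T 0 * T 2 = T 1)
    (j : ℝ) (hj : 0 ≤ j) (hj2 : ∃ m : ℤ, (m : ℝ) = 2 * j)
    (hcas : T 0 ^ 2 + T 1 ^ 2 + T 2 ^ 2
      = -(((j * (j + 1) : ℝ) : ℂ)) • (1 : Module.End ℂ V)) :
    (St T + (j : ℂ) • (1 : Module.End ℂ (Fin 3 → V)))
        * (St T - 1)
        * (St T - ((j : ℂ) + 1) • (1 : Module.End ℂ (Fin 3 → V))) = 0
    ∧ ∀ μ : ℂ, Module.End.HasEigenvalue (St T) μ →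
        μ = -(j : ℂ) ∨ μ = 1 ∨ μ = (j : ℂ) + 1 :=
  St_cubic_annihilated_general ⟨h12, h23, h31⟩ (by exact_mod_cast hcas)
end

section
/- Assume the su(2) endomorphism triple setup with Casimir parameter j, where V is a nonzero finite-dimensional complex vector space and j is a real number with j > 0 and 2j ∈ ℤ. Define the ℂ-linear endomorphism M₁ of (Fin 3 → V) × V by M₁(a, φ) = ( (Σ_{b,c} ε_{abc} T_b(a_c) − T_a(φ))_{a=1,2,3}, Σ_{a} T_a(a_a) ). Then the spectrum of M₁ is exactly {−j, j+1}. (These are the indicial roots of the linearized gauge-fixed KW operator at the Nahm pole in the (a_a, φ_y) sector.) -/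
/-- The indicial operator in the `(a_a, φ_y)` sector:
`M₁(a, φ) = ((Σ_{b,c} ε_{abc} T_b(a_c) − T_a(φ))_a , Σ_a T_a(a_a))`. -/
noncomputable def M1 {V : Type*} [AddCommGroup V] [Module ℂ V]
    (T : Fin 3 → Module.End ℂ V) : Module.End ℂ ((Fin 3 → V) × V) :=
  LinearMap.prod
    (LinearMap.pi fun a =>
      (∑ b, ∑ c, eps3 a b c •
          ((T b) ∘ₗ (LinearMap.proj c) ∘ₗ (LinearMap.fst ℂ (Fin 3 → V) V)))
        - (T a) ∘ₗ (LinearMap.snd ℂ (Fin 3 → V) V))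
    (∑ a, (T a) ∘ₗ (LinearMap.proj a) ∘ₗ (LinearMap.fst ℂ (Fin 3 → V) V))

/-!
The operator `M₁` is a Dirac operator: identifying `(a, φ)` with the `V`-valued quaternion
`φ - a₀ i - a₁ j - a₂ k`, it becomes `T₀ i + T₁ j + T₂ k`, where the quaternion units act by left
multiplication and hence commute with the `T_a`. The quaternion relations turn its square into
`-∑ T_a²` plus the commutators `[T_a, T_b]` times the third unit, so `M₁² = M₁ + j(j+1)`, that is
`(M₁ + j)(M₁ - (j+1)) = 0`. Since `M₁(0, φ) = (-T φ, 0)`, the operator `M₁` is not a scalar unless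
all `T_a` vanish, and therefore neither factor is invertible.
-/

open Polynomial in
lemma spectrum_eq_pair_of_sub_mul_sub_eq_zero {K A : Type*} [Field K] [Ring A] [Algebra K A]
    {x : A} {r s : K} (h : (x - algebraMap K A r) * (x - algebraMap K A s) = 0)
    (hr : x ≠ algebraMap K A r) (hs : x ≠ algebraMap K A s) : spectrum K x = {r, s} := by
  refine Set.Subset.antisymm (fun c hc => ?_) (Set.pair_subset ?_ ?_)
  · have : Nontrivial A := ⟨_, _, hr⟩
    have hroot := spectrum.subset_polynomial_aeval x ((X - C r) * (X - C s)) ⟨c, hc, rfl⟩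
    simpa [h, sub_eq_zero] using hroot
  · rw [spectrum.mem_iff, IsUnit.sub_iff]
    exact fun hu => hs (sub_eq_zero.mp (hu.mul_right_eq_zero.mp h))
  · rw [spectrum.mem_iff, IsUnit.sub_iff]
    exact fun hu => hr (sub_eq_zero.mp (hu.mul_left_eq_zero.mp h))

/-- A triple satisfying the commutation relations of the standard basis of `su(2)`, normalized so
that the commutator is the cross product. -/
structure IsSu2Triple_s6 {A : Type*} [NonUnitalNonAssocRing A] (t : Fin 3 → A) : Prop where
  commutator_zero_one : t 0 * t 1 - t 1 * t 0 = t 2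
  commutator_one_two : t 1 * t 2 - t 2 * t 1 = t 0
  commutator_two_zero : t 2 * t 0 - t 0 * t 2 = t 1

namespace IsSu2Triple_s6

lemma map {A B F : Type*} [NonUnitalNonAssocRing A] [NonUnitalNonAssocRing B] [FunLike F A B]
    [NonUnitalRingHomClass F A B] {t : Fin 3 → A} (ht : IsSu2Triple_s6 t) (f : F) :
    IsSu2Triple_s6 (f ∘ t) where
  commutator_zero_one := by simp [← map_mul, ← map_sub, ht.commutator_zero_one]
  commutator_one_two := by simp [← map_mul, ← map_sub, ht.commutator_one_two]
  commutator_two_zero := by simp [← map_mul, ← map_sub, ht.commutator_two_zero]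

lemma quaternion_contraction_mul_self {R A : Type*} [CommRing R] [Ring A] [Algebra R A]
    {t : Fin 3 → A} (ht : IsSu2Triple_s6 t) (q : QuaternionAlgebra.Basis A (-1 : R) 0 (-1))
    (hi : ∀ a, Commute q.i (t a)) (hj : ∀ a, Commute q.j (t a)) :
    (t 0 * q.i + t 1 * q.j + t 2 * q.k) * (t 0 * q.i + t 1 * q.j + t 2 * q.k) =
      t 0 * q.i + t 1 * q.j + t 2 * q.k - (t 0 ^ 2 + t 1 ^ 2 + t 2 ^ 2) := by
  have hk (a : Fin 3) : Commute q.k (t a) := q.i_mul_j ▸ (hi a).mul_left (hj a)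
  calc
    _ = (t 1 * t 2 - t 2 * t 1) * q.i + (t 2 * t 0 - t 0 * t 2) * q.j
          + (t 0 * t 1 - t 1 * t 0) * q.k - (t 0 ^ 2 + t 1 ^ 2 + t 2 ^ 2) := by
      simp only [add_mul, mul_add, (hi _).mul_mul_mul_comm, (hj _).mul_mul_mul_comm,
        (hk _).mul_mul_mul_comm, q.i_mul_i, q.j_mul_j, q.k_mul_k, q.i_mul_j, q.j_mul_i,
        q.j_mul_k, q.k_mul_j, q.k_mul_i, q.i_mul_k]
      simp only [neg_smul, one_smul, zero_smul, mul_neg, mul_one, neg_neg]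
      noncomm_ring
    _ = _ := by
      rw [ht.commutator_zero_one, ht.commutator_one_two, ht.commutator_two_zero]

end IsSu2Triple_s6

/-- Left multiplication by the quaternion units on `V`-valued quaternions, where `(a, φ)` encodes
the quaternion `φ - a₀ i - a₁ j - a₂ k`. -/
def quaternionBasisEnd (R V : Type*) [CommRing R] [AddCommGroup V] [Module R V] :
    QuaternionAlgebra.Basis (Module.End R ((Fin 3 → V) × V)) (-1 : R) 0 (-1) where
  i :=
    { toFun x := (![-x.2, -x.1 2, x.1 1], x.1 0)
      map_add' x y := by simp [add_comm]
      map_smul' c x := by simp }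
  j :=
    { toFun x := (![x.1 2, -x.2, -x.1 0], x.1 1)
      map_add' x y := by simp [add_comm]
      map_smul' c x := by simp }
  k :=
    { toFun x := (![-x.1 1, x.1 0, -x.2], x.1 2)
      map_add' x y := by simp [add_comm]
      map_smul' c x := by simp }
  i_mul_i := LinearMap.ext fun x =>
    Prod.ext (funext fun a => by fin_cases a <;> simp) (by simp)
  j_mul_j := LinearMap.ext fun x =>
    Prod.ext (funext fun a => by fin_cases a <;> simp) (by simp)
  i_mul_j := LinearMap.ext fun x =>
    Prod.ext (funext fun a => by fin_cases a <;> simp) (by simp)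
  j_mul_i := LinearMap.ext fun x =>
    Prod.ext (funext fun a => by fin_cases a <;> simp) (by simp)

/-- The entrywise action of `End V` on pairs `(a, φ)`; on `V`-valued quaternions it is the action
on coefficients. -/
def diagonalAction (R V : Type*) [CommRing R] [AddCommGroup V] [Module R V] :
    Module.End R V →ₐ[R] Module.End R ((Fin 3 → V) × V) :=
  Algebra.lsmul R R ((Fin 3 → V) × V)

section

variable {R V : Type*} [CommRing R] [AddCommGroup V] [Module R V]

@[simp]
lemma diagonalAction_apply (f : Module.End R V) (x : (Fin 3 → V) × V) :
    diagonalAction R V f x = (fun a => f (x.1 a), f x.2) :=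
  rfl

lemma commute_quaternionBasisEnd_i_diagonalAction (f : Module.End R V) :
    Commute (quaternionBasisEnd R V).i (diagonalAction R V f) :=
  LinearMap.ext fun x => Prod.ext
    (funext fun a => by fin_cases a <;> simp [quaternionBasisEnd]) (by simp [quaternionBasisEnd])

lemma commute_quaternionBasisEnd_j_diagonalAction (f : Module.End R V) :
    Commute (quaternionBasisEnd R V).j (diagonalAction R V f) :=
  LinearMap.ext fun x => Prod.ext
    (funext fun a => by fin_cases a <;> simp [quaternionBasisEnd]) (by simp [quaternionBasisEnd])

end

lemma ne_zero_of_sum_sq_eq_smul_one {K A : Type*} [DivisionRing K] [Ring A] [Nontrivial A]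
    [Module K A] {t : Fin 3 → A} {c : K} (hc : c ≠ 0)
    (h : t 0 ^ 2 + t 1 ^ 2 + t 2 ^ 2 = c • (1 : A)) : t ≠ 0 := by
  rintro rfl
  exact hc (by simpa using h.symm)

section

variable {V : Type*} [AddCommGroup V] [Module ℂ V] {T : Fin 3 → Module.End ℂ V}

lemma M1_eq_quaternion_contraction (T : Fin 3 → Module.End ℂ V) :
    M1 T = diagonalAction ℂ V (T 0) * (quaternionBasisEnd ℂ V).i
      + diagonalAction ℂ V (T 1) * (quaternionBasisEnd ℂ V).j
      + diagonalAction ℂ V (T 2) * (quaternionBasisEnd ℂ V).k := by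
  refine LinearMap.ext fun x => Prod.ext (funext fun a => ?_) ?_
  · fin_cases a <;>
      simp [M1, eps3, quaternionBasisEnd, Fin.sum_univ_three] <;> norm_num <;> abel
  · simp [M1, quaternionBasisEnd, Fin.sum_univ_three]

lemma M1_mul_self (hT : IsSu2Triple_s6 T) :
    M1 T * M1 T = M1 T - diagonalAction ℂ V (T 0 ^ 2 + T 1 ^ 2 + T 2 ^ 2) := by
  simp only [M1_eq_quaternion_contraction, map_add, map_pow]
  exact (hT.map (diagonalAction ℂ V)).quaternion_contraction_mul_self _
    (fun a => commute_quaternionBasisEnd_i_diagonalAction (T a))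
    (fun a => commute_quaternionBasisEnd_j_diagonalAction (T a))

lemma M1_ne_algebraMap (hT : T ≠ 0) (c : ℂ) : M1 T ≠ algebraMap ℂ _ c := by
  refine fun h => hT (funext fun a => LinearMap.ext fun v => ?_)
  have hv := congrFun (congrArg Prod.fst (LinearMap.congr_fun h (0, v))) a
  simpa [M1, Module.algebraMap_end_apply] using hv

theorem spectrum_M1_general (hT : IsSu2Triple_s6 T) (hT0 : T ≠ 0) (j : ℂ)
    (hcas : T 0 ^ 2 + T 1 ^ 2 + T 2 ^ 2 = -(j * (j + 1)) • (1 : Module.End ℂ V)) :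
    spectrum ℂ (M1 T) = {-j, j + 1} := by
  refine spectrum_eq_pair_of_sub_mul_sub_eq_zero ?_ (M1_ne_algebraMap hT0 _)
    (M1_ne_algebraMap hT0 _)
  have hsq : M1 T * M1 T = M1 T + (j * (j + 1)) • (1 : Module.End ℂ _) := by
    rw [M1_mul_self hT, hcas, map_smul, map_one]
    module
  simp only [Algebra.algebraMap_eq_smul_one, sub_mul, mul_sub, hsq, smul_mul_assoc,
    mul_smul_comm, one_mul, mul_one]
  module

end

/-- For an su(2) endomorphism triple with Casimir parameter `j > 0` (with `2j ∈ ℤ`) on a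
nonzero finite-dimensional complex vector space, the spectrum of the indicial operator `M₁`
in the `(a_a, φ_y)` sector is exactly `{−j, j+1}`. -/
theorem spectrum_M1 {V : Type*} [AddCommGroup V] [Module ℂ V]
    [FiniteDimensional ℂ V] [Nontrivial V]
    (T : Fin 3 → Module.End ℂ V)
    (h12 : T 0 * T 1 - T 1 * T 0 = T 2)
    (h23 : T 1 * T 2 - T 2 * T 1 = T 0)
    (h31 : T 2 * T 0 - T 0 * T 2 = T 1)
    (j : ℝ) (hj : 0 < j) (hj2 : ∃ m : ℤ, (m : ℝ) = 2 * j)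
    (hcas : T 0 ^ 2 + T 1 ^ 2 + T 2 ^ 2
      = -(((j * (j + 1) : ℝ) : ℂ)) • (1 : Module.End ℂ V)) :
    spectrum ℂ (M1 T) = {-(j : ℂ), (j : ℂ) + 1} := by
  have hcas0 : -((j * (j + 1) : ℝ) : ℂ) ≠ 0 :=
    neg_ne_zero.mpr (Complex.ofReal_ne_zero.mpr (by positivity))
  exact spectrum_M1_general ⟨h12, h23, h31⟩ (ne_zero_of_sum_sq_eq_smul_one hcas0 hcas) j
    (by exact_mod_cast hcas)
end

section
/- Let j ≥ 0 be a real number. The function u(x) = x₄^{j+1} · ‖x‖^{−(2j+4)} on Ω = {x ∈ ℝ⁴ : x₄ > 0} satisfies Σ_{i=1}^{4} ∂²u/∂x_i² = j(j+1) · x₄^{−2} · u on Ω. (In polar form u = cos^{j+1}ψ · r^{−(j+3)} with cos ψ = x₄/‖x‖: this is the mode by which fluctuations around the Nahm pole solution in four dimensions decay as r^{−3−j} at infinity and vanish as x₄^{j+1} at the boundary.) -/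
/-- Partial derivative in the `i`-th coordinate direction of a real-valued function on `ℝᵈ`. -/
noncomputable def pdR {d : ℕ} (i : Fin d) (f : (Fin d → ℝ) → ℝ) (x : Fin d → ℝ) : ℝ :=
  deriv (fun t => f (Function.update x i t)) (x i)

/-!
If `f` is homogeneous of degree `a` on `ℝᵈ`, its Kelvin transform is `‖x‖^(2 - d - 2a) f`, and
`Δ (‖x‖^(2 - d - 2a) f) = ‖x‖^(2 - d - 2a) Δ f`: in the product rule Euler's identity evaluates the
gradient term, which for this exponent cancels the Laplacian of the power of the norm. The decay
mode is the Kelvin transform of `x₄ ^ (j + 1)`, an eigenfunction of `x₄² Δ` with eigenvalue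
`j (j + 1)`.
-/

open Filter Function Topology

section PartialDerivatives

variable {d : ℕ} {f g : (Fin d → ℝ) → ℝ} {x : Fin d → ℝ}

lemma pdR_congr_of_eventuallyEq (i : Fin d) (hfg : f =ᶠ[𝓝 x] g) : pdR i f x = pdR i g x := by
  have update_tendsto : Tendsto (update x i) (𝓝 (x i)) (𝓝 x) := by
    simpa using (hasDerivAt_update x i (x i)).continuousAt.tendsto
  exact (hfg.comp_tendsto update_tendsto).deriv_eq

lemma pdR_eq_fderiv (i : Fin d) (hf : DifferentiableAt ℝ f x) :
    pdR i f x = fderiv ℝ f x (Pi.single i 1) := by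
  have hf' : HasFDerivAt f (fderiv ℝ f x) (update x i (x i)) := by
    simpa using hf.hasFDerivAt
  exact (hf'.comp_hasDerivAt (x i) (hasDerivAt_update x i (x i))).deriv

lemma pdR_add (i : Fin d) (hf : DifferentiableAt ℝ f x) (hg : DifferentiableAt ℝ g x) :
    pdR i (f + g) x = pdR i f x + pdR i g x := by
  simp only [pdR_eq_fderiv i, hf, hg, hf.add hg, fderiv_add, add_apply]

lemma pdR_mul (i : Fin d) (hf : DifferentiableAt ℝ f x) (hg : DifferentiableAt ℝ g x) :
    pdR i (f * g) x = pdR i f x * g x + f x * pdR i g x := by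
  rw [pdR_eq_fderiv i (hf.mul hg), fderiv_mul hf hg, pdR_eq_fderiv i hf, pdR_eq_fderiv i hg]
  simp only [add_apply, smul_apply, smul_eq_mul]
  ring

lemma differentiableAt_pdR (i : Fin d) (hf : ContDiffAt ℝ 2 f x) :
    DifferentiableAt ℝ (pdR i f) x := by
  have pdR_near : pdR i f =ᶠ[𝓝 x] fun y => fderiv ℝ f y (Pi.single i 1) := by
    filter_upwards [hf.eventually (by simp)] with y hy
    exact pdR_eq_fderiv i (hy.differentiableAt two_ne_zero)
  have fderiv_differentiable : DifferentiableAt ℝ (fderiv ℝ f) x :=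
    (hf.fderiv_right (m := 1) one_add_one_eq_two.le).differentiableAt one_ne_zero
  exact (fderiv_differentiable.clm_apply (differentiableAt_const _)).congr_of_eventuallyEq pdR_near

lemma pdR_pdR_mul (i : Fin d) (hf : ContDiffAt ℝ 2 f x) (hg : ContDiffAt ℝ 2 g x) :
    pdR i (pdR i (f * g)) x =
      pdR i (pdR i f) x * g x + 2 * (pdR i f x * pdR i g x) + f x * pdR i (pdR i g) x := by
  have pdR_near : pdR i (f * g) =ᶠ[𝓝 x] pdR i f * g + f * pdR i g := by
    filter_upwards [hf.eventually (by simp), hg.eventually (by simp)] with y hfy hgy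
    exact pdR_mul i (hfy.differentiableAt two_ne_zero) (hgy.differentiableAt two_ne_zero)
  have hf₁ := hf.differentiableAt two_ne_zero
  have hg₁ := hg.differentiableAt two_ne_zero
  have hf₂ := differentiableAt_pdR i hf
  have hg₂ := differentiableAt_pdR i hg
  rw [pdR_congr_of_eventuallyEq i pdR_near, pdR_add i (hf₂.mul hg₁) (hf₁.mul hg₂),
    pdR_mul i hf₂ hg₁, pdR_mul i hf₁ hg₂]
  ring

lemma sum_pdR_pdR_mul (hf : ContDiffAt ℝ 2 f x) (hg : ContDiffAt ℝ 2 g x) :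
    ∑ i, pdR i (pdR i (f * g)) x =
      (∑ i, pdR i (pdR i f) x) * g x + 2 * ∑ i, pdR i f x * pdR i g x
        + f x * ∑ i, pdR i (pdR i g) x := by
  simp only [pdR_pdR_mul _ hf hg, Finset.sum_add_distrib, Finset.sum_mul, Finset.mul_sum]

end PartialDerivatives

section OneCoordinate

variable {d : ℕ}

lemma pdR_comp_apply (i m : Fin d) (φ : ℝ → ℝ) :
    pdR i (fun x => φ (x m)) = fun x => if i = m then deriv φ (x m) else 0 := by
  ext x
  rcases eq_or_ne i m with rfl | him
  · simp [pdR]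
  · simp [pdR, him, him.symm]

lemma sum_pdR_pdR_comp_apply (m : Fin d) (φ : ℝ → ℝ) (x : Fin d → ℝ) :
    ∑ i, pdR i (pdR i fun y => φ (y m)) x = deriv (deriv φ) (x m) := by
  rw [Finset.sum_eq_single_of_mem m (Finset.mem_univ m)]
  · simp only [pdR_comp_apply, if_true]
  · intro i _ him
    rw [pdR_comp_apply]
    simp [him, pdR]

lemma sum_mul_pdR_comp_apply (m : Fin d) (φ : ℝ → ℝ) (x : Fin d → ℝ) :
    ∑ i, x i * pdR i (fun y => φ (y m)) x = x m * deriv φ (x m) := by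
  simp [pdR_comp_apply]

end OneCoordinate

section NormPowers

variable {d : ℕ} {x : Fin d → ℝ}

lemma sum_sq_pos (hx : x ≠ 0) : 0 < ∑ k, x k ^ 2 := by
  obtain ⟨k, hk⟩ := Function.ne_iff.mp hx
  exact Finset.sum_pos' (fun k _ => sq_nonneg (x k)) ⟨k, Finset.mem_univ k, sq_pos_iff.mpr hk⟩

lemma contDiffAt_sum_sq_rpow {n : WithTop ℕ∞} (b : ℝ) (hx : x ≠ 0) :
    ContDiffAt ℝ n (fun y : Fin d → ℝ => (∑ k, y k ^ 2) ^ b) x :=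
  ContDiffAt.rpow_const_of_ne (by fun_prop) (sum_sq_pos hx).ne'

lemma pdR_sum_sq_rpow (b : ℝ) (i : Fin d) (hx : x ≠ 0) :
    pdR i (fun y => (∑ k, y k ^ 2) ^ b) x = 2 * b * (x i * (∑ k, x k ^ 2) ^ (b - 1)) := by
  have sum_sq_deriv : HasDerivAt (fun t => ∑ k, update x i t k ^ 2) (2 * x i) (x i) := by
    have coord_deriv := hasDerivAt_pi.mp (hasDerivAt_update x i (x i))
    simpa [Pi.single_apply] using
      HasDerivAt.fun_sum (u := Finset.univ) fun k _ => (coord_deriv k).fun_pow 2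
  rw [pdR, (sum_sq_deriv.rpow_const (Or.inl (by simpa using (sum_sq_pos hx).ne'))).deriv,
    update_eq_self]
  ring

lemma pdR_pdR_sum_sq_rpow (b : ℝ) (i : Fin d) (hx : x ≠ 0) :
    pdR i (pdR i fun y => (∑ k, y k ^ 2) ^ b) x =
      2 * b * (∑ k, x k ^ 2) ^ (b - 1)
        + 4 * b * (b - 1) * x i ^ 2 * (∑ k, x k ^ 2) ^ (b - 1 - 1) := by
  have pdR_near : (pdR i fun y => (∑ k, y k ^ 2) ^ b) =ᶠ[𝓝 x]
      (fun y => 2 * b * y i) * fun y => (∑ k, y k ^ 2) ^ (b - 1) := by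
    filter_upwards [isOpen_ne.mem_nhds hx] with y hy
    simpa only [Pi.mul_apply, mul_assoc] using pdR_sum_sq_rpow b i hy
  have pdR_linear : pdR i (fun y => 2 * b * y i) x = 2 * b := by
    simp [pdR_comp_apply i i (2 * b * ·)]
  rw [pdR_congr_of_eventuallyEq i pdR_near,
    pdR_mul i (by fun_prop) ((contDiffAt_sum_sq_rpow _ hx).differentiableAt one_ne_zero),
    pdR_linear, pdR_sum_sq_rpow _ i hx]
  ring

lemma sum_pdR_pdR_sum_sq_rpow (b : ℝ) (hx : x ≠ 0) :
    ∑ i, pdR i (pdR i fun y => (∑ k, y k ^ 2) ^ b) x =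
      2 * b * (2 * (b - 1) + d) * (∑ k, x k ^ 2) ^ (b - 1) := by
  have rpow_step : (∑ k, x k ^ 2) * (∑ k, x k ^ 2) ^ (b - 1 - 1) = (∑ k, x k ^ 2) ^ (b - 1) := by
    rw [Real.rpow_sub_one (sum_sq_pos hx).ne' (b - 1), mul_div_cancel₀ _ (sum_sq_pos hx).ne']
  simp only [pdR_pdR_sum_sq_rpow _ _ hx, Finset.sum_add_distrib, Finset.sum_const,
    Finset.card_univ, Fintype.card_fin, nsmul_eq_mul, ← Finset.sum_mul, ← Finset.mul_sum]
  linear_combination 4 * b * (b - 1) * rpow_step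

end NormPowers

section KelvinTransform

variable {d : ℕ} {f : (Fin d → ℝ) → ℝ} {x : Fin d → ℝ} {a : ℝ}

lemma sum_pdR_pdR_mul_sum_sq_rpow (b : ℝ) (hx : x ≠ 0) (hf : ContDiffAt ℝ 2 f x)
    (euler : ∑ i, x i * pdR i f x = a * f x) :
    ∑ i, pdR i (pdR i (f * fun y => (∑ k, y k ^ 2) ^ b)) x =
      (∑ i, pdR i (pdR i f) x) * (∑ k, x k ^ 2) ^ b
        + 2 * b * (2 * (a + b - 1) + d) * f x * (∑ k, x k ^ 2) ^ (b - 1) := by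
  have gradient_term : ∑ i, pdR i f x * pdR i (fun y => (∑ k, y k ^ 2) ^ b) x =
      2 * b * (a * f x) * (∑ k, x k ^ 2) ^ (b - 1) := by
    rw [← euler, Finset.mul_sum, Finset.sum_mul]
    refine Finset.sum_congr rfl fun i _ => ?_
    rw [pdR_sum_sq_rpow b i hx]
    ring
  rw [sum_pdR_pdR_mul hf (contDiffAt_sum_sq_rpow b hx), gradient_term,
    sum_pdR_pdR_sum_sq_rpow b hx]
  ring

lemma sum_pdR_pdR_kelvinTransform (hx : x ≠ 0) (hf : ContDiffAt ℝ 2 f x)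
    (euler : ∑ i, x i * pdR i f x = a * f x) :
    ∑ i, pdR i (pdR i (f * fun y => (∑ k, y k ^ 2) ^ (1 - d / 2 - a))) x =
      (∑ i, pdR i (pdR i f) x) * (∑ k, x k ^ 2) ^ (1 - d / 2 - a) := by
  rw [sum_pdR_pdR_mul_sum_sq_rpow _ hx hf euler]
  ring

end KelvinTransform

section CoordinatePowers

variable {d : ℕ} {m : Fin d} {x : Fin d → ℝ}

lemma sum_pdR_pdR_apply_rpow (a : ℝ) (hx : x m ≠ 0) :
    ∑ i, pdR i (pdR i fun y => y m ^ a) x = a * (a - 1) * (x m ^ 2)⁻¹ * x m ^ a := by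
  rw [sum_pdR_pdR_comp_apply m (· ^ a), Real.deriv_rpow_const', deriv_const_mul_field,
    Real.deriv_rpow_const, Real.rpow_sub_one hx (a - 1), Real.rpow_sub_one hx a]
  field_simp

lemma sum_mul_pdR_apply_rpow (a : ℝ) (hx : x m ≠ 0) :
    ∑ i, x i * pdR i (fun y => y m ^ a) x = a * x m ^ a := by
  rw [sum_mul_pdR_comp_apply m (· ^ a), Real.deriv_rpow_const, Real.rpow_sub_one hx]
  field_simp

end CoordinatePowers

theorem four_dim_decay_mode_general {d : ℕ} (m : Fin d) (j : ℝ) (u : (Fin d → ℝ) → ℝ)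
    (hu : ∀ x, u x = x m ^ (j + 1) * Real.sqrt (∑ i, x i ^ 2) ^ (-(2 * j + d))) :
    ∀ x : Fin d → ℝ, 0 < x m →
      ∑ i, pdR i (pdR i u) x = j * (j + 1) * (x m ^ 2)⁻¹ * u x := by
  intro x hxm
  have hx : x ≠ 0 := fun h => hxm.ne' (congrFun h m)
  have u_eq_kelvin :
      u = (fun y => y m ^ (j + 1)) * fun y => (∑ k, y k ^ 2) ^ (1 - d / 2 - (j + 1)) := by
    ext y
    rw [hu, Pi.mul_apply, Real.sqrt_eq_rpow,
      ← Real.rpow_mul (Finset.sum_nonneg fun k _ => sq_nonneg (y k))]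
    ring_nf
  have smooth : ContDiffAt ℝ 2 (fun y : Fin d → ℝ => y m ^ (j + 1)) x :=
    ContDiffAt.rpow_const_of_ne (by fun_prop) hxm.ne'
  rw [u_eq_kelvin, sum_pdR_pdR_kelvinTransform hx smooth (sum_mul_pdR_apply_rpow _ hxm.ne'),
    sum_pdR_pdR_apply_rpow _ hxm.ne', Pi.mul_apply]
  ring

/-- For `j ≥ 0`, the function `u(x) = x₄^{j+1} ‖x‖^{−(2j+4)}` on the half-space `x₄ > 0`
in `ℝ⁴` satisfies `Σᵢ ∂²u/∂xᵢ² = j(j+1) x₄⁻² u`. This is the mode by which fluctuations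
around the Nahm pole solution decay as `r^{−3−j}` at infinity and vanish as `x₄^{j+1}` at
the boundary. -/
theorem four_dim_decay_mode (j : ℝ) (hj : 0 ≤ j)
    (u : (Fin 4 → ℝ) → ℝ)
    (hu : ∀ x, u x = (x 3) ^ (j + 1) * (Real.sqrt (∑ i, x i ^ 2)) ^ (-(2 * j + 4))) :
    ∀ x : Fin 4 → ℝ, 0 < x 3 →
      ∑ i, pdR i (pdR i u) x = j * (j + 1) * ((x 3) ^ 2)⁻¹ * u x :=
  four_dim_decay_mode_general 3 j u (by exact_mod_cast hu)
end

section
/- Let j ≥ 0 be a real number. The function u(x) = x₅^{j+1} · ‖x‖^{−(2j+5)} on Ω = {x ∈ ℝ⁵ : x₅ > 0} satisfies Σ_{i=1}^{5} ∂²u/∂x_i² = j(j+1) · x₅^{−2} · u on Ω. (In polar form u = cos^{j+1}ψ · r^{−(j+4)}: fluctuations around the Nahm pole solution of the five-dimensional equations decay as r^{−4−j}, exactly one extra power of 1/r compared to the four-dimensional case.) -/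
/-!
Write `S = ‖x‖²`. The product and chain rules for the Laplacian reduce `Δ (x_k ^ p * S ^ q)` to
`Δ x_k = 0`, `|∇x_k|² = 1`, `Δ S = 2 d`, `|∇S|² = 4 S` and `∇x_k · ∇S = 2 x_k`, which give
`p (p - 1) x_k ^ (p - 2) S ^ q + 2 q (2 p + 2 q + d - 2) x_k ^ p S ^ (q - 1)`.
For `p = j + 1`, the exponent `2 q = -(2 j + d)` is the one that kills the second term.
-/

section Laplacian

variable {d : ℕ}

/-- The Laplacian `Δ f = ∑ᵢ ∂²f/∂xᵢ²` on `ℝᵈ`, as the sum of the iterated partial derivatives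
`pdR`. -/
noncomputable def coordLaplacian (f : (Fin d → ℝ) → ℝ) (x : Fin d → ℝ) : ℝ :=
  ∑ i, pdR i (pdR i f) x

/-- The inner product `∇f · ∇g` of two gradients on `ℝᵈ`, the cross term of the product rule for
the Laplacian. -/
noncomputable def gradInner (f g : (Fin d → ℝ) → ℝ) (x : Fin d → ℝ) : ℝ :=
  ∑ i, pdR i f x * pdR i g x

/-- The squared Euclidean norm on `ℝᵈ`; the norm of the type `Fin d → ℝ` is the supremum norm. -/
def sumSq (x : Fin d → ℝ) : ℝ :=
  ∑ i, x i ^ 2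

variable {f g : (Fin d → ℝ) → ℝ} {x : Fin d → ℝ}

lemma pdR_pdR_eq_iteratedDeriv (i : Fin d) (f : (Fin d → ℝ) → ℝ) (x : Fin d → ℝ) :
    pdR i (pdR i f) x = iteratedDeriv 2 (fun t => f (Function.update x i t)) (x i) := by
  simp only [pdR, Function.update_idem, Function.update_self, iteratedDeriv_succ,
    iteratedDeriv_zero]

lemma pdR_const (i : Fin d) (c : ℝ) (x : Fin d → ℝ) : pdR i (fun _ => c) x = 0 :=
  deriv_const (x i) c

lemma pdR_const_mul (i : Fin d) (c : ℝ) (f : (Fin d → ℝ) → ℝ) (x : Fin d → ℝ) :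
    pdR i (fun y => c * f y) x = c * pdR i f x :=
  deriv_const_mul_field c

lemma contDiffAt_comp_update {n : WithTop ℕ∞} (hf : ContDiffAt ℝ n f x) (i : Fin d) :
    ContDiffAt ℝ n (fun t => f (Function.update x i t)) (x i) :=
  ContDiffAt.comp (x i) (by rwa [Function.update_eq_self]) (contDiff_update n x i).contDiffAt

lemma pdR_comp {φ : ℝ → ℝ} (i : Fin d) (hφ : DifferentiableAt ℝ φ (f x))
    (hf : DifferentiableAt ℝ f x) :
    pdR i (fun y => φ (f y)) x = deriv φ (f x) * pdR i f x := by
  have hline : DifferentiableAt ℝ (fun t => f (Function.update x i t)) (x i) :=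
    DifferentiableAt.comp (x i) (by rwa [Function.update_eq_self])
      (hasDerivAt_update x i (x i)).differentiableAt
  have h := deriv_comp (h₂ := φ) (x i) (by rwa [Function.update_eq_self]) hline
  rwa [Function.update_eq_self] at h

lemma gradInner_comp {φ ψ : ℝ → ℝ} (hφ : DifferentiableAt ℝ φ (f x))
    (hψ : DifferentiableAt ℝ ψ (g x)) (hf : DifferentiableAt ℝ f x)
    (hg : DifferentiableAt ℝ g x) :
    gradInner (fun y => φ (f y)) (fun y => ψ (g y)) x =
      deriv φ (f x) * deriv ψ (g x) * gradInner f g x := by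
  simp only [gradInner, pdR_comp _ hφ hf, pdR_comp _ hψ hg, Finset.mul_sum, mul_mul_mul_comm]

lemma coordLaplacian_comp {φ : ℝ → ℝ} (hφ : ContDiffAt ℝ 2 φ (f x))
    (hf : ContDiffAt ℝ 2 f x) :
    coordLaplacian (fun y => φ (f y)) x =
      iteratedDeriv 2 φ (f x) * gradInner f f x + deriv φ (f x) * coordLaplacian f x := by
  simp only [coordLaplacian, gradInner, Finset.mul_sum, ← Finset.sum_add_distrib]
  refine Finset.sum_congr rfl fun i _ => ?_
  have h := iteratedDeriv_comp_two (g := φ) (by rwa [Function.update_eq_self])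
    (contDiffAt_comp_update hf i)
  rw [Function.update_eq_self, sq] at h
  rw [pdR_pdR_eq_iteratedDeriv, pdR_pdR_eq_iteratedDeriv]
  exact h

lemma coordLaplacian_mul (hf : ContDiffAt ℝ 2 f x) (hg : ContDiffAt ℝ 2 g x) :
    coordLaplacian (fun y => f y * g y) x =
      coordLaplacian f x * g x + 2 * gradInner f g x + f x * coordLaplacian g x := by
  simp only [coordLaplacian, gradInner, Finset.mul_sum, Finset.sum_mul, ← Finset.sum_add_distrib]
  refine Finset.sum_congr rfl fun i _ => ?_
  have h := iteratedDeriv_fun_mul (n := 2) (contDiffAt_comp_update hf i)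
    (contDiffAt_comp_update hg i)
  simp only [Finset.sum_range_succ, Finset.sum_range_zero, iteratedDeriv_zero, iteratedDeriv_one,
    Function.update_eq_self, Nat.choose_zero_right, Nat.choose_one_right, Nat.choose_self,
    Nat.sub_zero, Nat.sub_self, Nat.reduceSub, Nat.cast_one, Nat.cast_ofNat] at h
  rw [pdR_pdR_eq_iteratedDeriv, h, pdR_pdR_eq_iteratedDeriv, pdR_pdR_eq_iteratedDeriv, pdR, pdR]
  ring

end Laplacian

section Powers

variable {d : ℕ} {f g : (Fin d → ℝ) → ℝ} {x : Fin d → ℝ}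

lemma iteratedDeriv_two_rpow_const (p t : ℝ) :
    iteratedDeriv 2 (fun s : ℝ => s ^ p) t = p * (p - 1) * t ^ (p - 2) := by
  rw [iteratedDeriv_eq_iterate, Real.iter_deriv_rpow_const]
  simp [descPochhammer_succ_right]

lemma coordLaplacian_rpow_const (p : ℝ) (hf : ContDiffAt ℝ 2 f x) (hx : f x ≠ 0) :
    coordLaplacian (fun y => f y ^ p) x =
      p * (p - 1) * f x ^ (p - 2) * gradInner f f x
        + p * f x ^ (p - 1) * coordLaplacian f x := by
  rw [coordLaplacian_comp (φ := (· ^ p)) (Real.contDiffAt_rpow_const_of_ne hx) hf,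
    iteratedDeriv_two_rpow_const, Real.deriv_rpow_const]

lemma gradInner_rpow_const (p q : ℝ) (hf : DifferentiableAt ℝ f x) (hg : DifferentiableAt ℝ g x)
    (hfx : f x ≠ 0) (hgx : g x ≠ 0) :
    gradInner (fun y => f y ^ p) (fun y => g y ^ q) x =
      p * f x ^ (p - 1) * (q * g x ^ (q - 1)) * gradInner f g x := by
  rw [gradInner_comp (φ := (· ^ p)) (ψ := (· ^ q))
    (Real.differentiableAt_rpow_const_of_ne p hfx) (Real.differentiableAt_rpow_const_of_ne q hgx)
    hf hg, Real.deriv_rpow_const, Real.deriv_rpow_const]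

end Powers

section CoordinateAndNorm

variable {d : ℕ} {x : Fin d → ℝ}

lemma hasDerivAt_update_apply (i k : Fin d) (x : Fin d → ℝ) (t : ℝ) :
    HasDerivAt (fun s => Function.update x i s k) ((Pi.single i 1 : Fin d → ℝ) k) t :=
  hasDerivAt_pi.1 (hasDerivAt_update x i t) k

lemma pdR_coord (i k : Fin d) :
    pdR i (fun y : Fin d → ℝ => y k) = fun _ => (Pi.single i 1 : Fin d → ℝ) k :=
  funext fun x => (hasDerivAt_update_apply i k x (x i)).deriv

lemma pdR_sumSq (i : Fin d) : pdR i sumSq = fun x => 2 * x i := by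
  funext x
  have h := HasDerivAt.fun_sum (u := Finset.univ)
    fun l _ => (hasDerivAt_update_apply i l x (x i)).fun_pow 2
  exact h.deriv.trans (by simp [Pi.single_apply])

lemma coordLaplacian_coord (k : Fin d) : coordLaplacian (fun y => y k) x = 0 := by
  simp only [coordLaplacian, pdR_coord, pdR_const, Finset.sum_const_zero]

lemma gradInner_coord_self (k : Fin d) : gradInner (fun y => y k) (fun y => y k) x = 1 := by
  simp [gradInner, pdR_coord, Pi.single_apply]

lemma gradInner_coord_sumSq (k : Fin d) : gradInner (fun y => y k) sumSq x = 2 * x k := by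
  simp [gradInner, pdR_coord, pdR_sumSq, Pi.single_apply]

lemma coordLaplacian_sumSq : coordLaplacian sumSq x = 2 * d := by
  simp only [coordLaplacian, pdR_sumSq, pdR_const_mul, pdR_coord, Pi.single_eq_same, mul_one,
    Finset.sum_const, Finset.card_univ, Fintype.card_fin, nsmul_eq_mul]
  exact mul_comm _ _

lemma gradInner_sumSq_self : gradInner sumSq sumSq x = 4 * sumSq x := by
  simp only [gradInner, pdR_sumSq, sumSq, Finset.mul_sum]
  exact Finset.sum_congr rfl fun i _ => by ring

lemma contDiff_sumSq {n : WithTop ℕ∞} : ContDiff ℝ n (sumSq (d := d)) := by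
  unfold sumSq
  fun_prop

lemma sumSq_pos {k : Fin d} (hx : x k ≠ 0) : 0 < sumSq x :=
  Finset.sum_pos' (fun i _ => sq_nonneg (x i)) ⟨k, Finset.mem_univ k, by positivity⟩

lemma coordLaplacian_coord_rpow_const (k : Fin d) (p : ℝ) (hx : x k ≠ 0) :
    coordLaplacian (fun y => y k ^ p) x = p * (p - 1) * x k ^ (p - 2) := by
  rw [coordLaplacian_rpow_const p (contDiff_apply ℝ ℝ k).contDiffAt hx, gradInner_coord_self,
    coordLaplacian_coord, mul_one, mul_zero, add_zero]

lemma coordLaplacian_sumSq_rpow_const (q : ℝ) (hx : sumSq x ≠ 0) :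
    coordLaplacian (fun y => sumSq y ^ q) x =
      2 * q * (2 * q + d - 2) * sumSq x ^ (q - 1) := by
  have hpow : sumSq x ^ (q - 2) * sumSq x = sumSq x ^ (q - 1) := by
    rw [← Real.rpow_add_one hx]
    ring_nf
  rw [coordLaplacian_rpow_const q contDiff_sumSq.contDiffAt hx, gradInner_sumSq_self,
    coordLaplacian_sumSq]
  linear_combination 4 * q * (q - 1) * hpow

lemma gradInner_coord_rpow_sumSq_rpow (k : Fin d) (p q : ℝ) (hx : x k ≠ 0) :
    gradInner (fun y => y k ^ p) (fun y => sumSq y ^ q) x =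
      2 * p * q * (x k ^ p * sumSq x ^ (q - 1)) := by
  have hpow : x k ^ (p - 1) * x k = x k ^ p := by
    rw [← Real.rpow_add_one hx, sub_add_cancel]
  rw [gradInner_rpow_const p q (differentiableAt_apply k x)
    (contDiff_sumSq.differentiable one_ne_zero x) hx (sumSq_pos hx).ne', gradInner_coord_sumSq]
  linear_combination 2 * p * q * sumSq x ^ (q - 1) * hpow

theorem coordLaplacian_coord_rpow_mul_sumSq_rpow (k : Fin d) (p q : ℝ) (hx : x k ≠ 0) :
    coordLaplacian (fun y => y k ^ p * sumSq y ^ q) x =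
      p * (p - 1) * x k ^ (p - 2) * sumSq x ^ q
        + 2 * q * (2 * p + 2 * q + d - 2) * (x k ^ p * sumSq x ^ (q - 1)) := by
  have hS : sumSq x ≠ 0 := (sumSq_pos hx).ne'
  rw [coordLaplacian_mul ((contDiff_apply ℝ ℝ k).contDiffAt.rpow_const_of_ne hx)
      (contDiff_sumSq.contDiffAt.rpow_const_of_ne hS),
    coordLaplacian_coord_rpow_const k p hx, gradInner_coord_rpow_sumSq_rpow k p q hx,
    coordLaplacian_sumSq_rpow_const q hS]
  ring

end CoordinateAndNorm

theorem five_dim_decay_mode_general {d : ℕ} (k : Fin d) (j : ℝ) (u : (Fin d → ℝ) → ℝ)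
    (hu : ∀ x, u x = (x k) ^ (j + 1) * (Real.sqrt (∑ i, x i ^ 2)) ^ (-(2 * j + d)))
    (x : Fin d → ℝ) (hx : 0 < x k) :
    ∑ i, pdR i (pdR i u) x = j * (j + 1) * ((x k) ^ 2)⁻¹ * u x := by
  have hu_pow : u = fun y => y k ^ (j + 1) * sumSq y ^ (-(2 * j + d) / 2) := by
    funext y
    rw [hu, sumSq, Real.rpow_div_two_eq_sqrt _ (Finset.sum_nonneg fun i _ => sq_nonneg (y i))]
  have hpow : x k ^ (j + 1 - 2) = x k ^ (j + 1) * (x k ^ 2)⁻¹ := by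
    rw [Real.rpow_sub hx, Real.rpow_two, div_eq_mul_inv]
  change coordLaplacian u x = _
  rw [hu_pow, coordLaplacian_coord_rpow_mul_sumSq_rpow k _ _ hx.ne', hpow]
  ring

/-- For `j ≥ 0`, the function `u(x) = x₅^{j+1} ‖x‖^{−(2j+5)}` on the half-space `x₅ > 0`
in `ℝ⁵` satisfies `Σᵢ ∂²u/∂xᵢ² = j(j+1) x₅⁻² u`. Fluctuations around the Nahm pole
solution of the five-dimensional equations decay as `r^{−4−j}`, one extra power of `1/r`
compared to the four-dimensional case. -/
theorem five_dim_decay_mode (j : ℝ) (hj : 0 ≤ j)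
    (u : (Fin 5 → ℝ) → ℝ)
    (hu : ∀ x, u x = (x 4) ^ (j + 1) * (Real.sqrt (∑ i, x i ^ 2)) ^ (-(2 * j + 5))) :
    ∀ x : Fin 5 → ℝ, 0 < x 4 →
      ∑ i, pdR i (pdR i u) x = j * (j + 1) * ((x 4) ^ 2)⁻¹ * u x := by
  exact five_dim_decay_mode_general 4 j u (mod_cast hu)
end

section
/- Let j ≥ 0 be a real number. For all ψ ∈ (0, π/2), the function f(ψ) = (cos ψ)^{j+1} satisfies the eigenvalue equation −(sin ψ)^{−3} · d/dψ( (sin ψ)³ · f′(ψ) ) + j(j+1) · (cos ψ)^{−2} · f(ψ) = (j+1)(j+4) · f(ψ). (That is, in the five-dimensional setting, cos^{j+1}ψ is an eigenfunction with eigenvalue (j+1)(j+4) of the operator W = Δ_{S⁴} + j(j+1)/cos²ψ restricted to functions of the polar angle ψ.) -/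
/-! On `S^(m+1)` the flux of `cos ^ p` is `sin ^ m * (cos ^ p)' = -p * sin ^ (m+1) * cos ^ (p-1)`.
Differentiating it once more and using `sin ^ 2 = 1 - cos ^ 2`, the Laplacian of `cos ^ p` is
`p (p + m) cos ^ p - p (p - 1) cos ^ (p-2)`. For `p = j + 1` the potential `j (j + 1) / cos ^ 2`
cancels the second term. -/

open Real

/-- The Laplacian of the unit sphere `S^(m+1)`, with the sign that makes it nonnegative, acting on
functions of the polar angle alone. The dimension is written `m + 1` because `m` is the exponent of
the volume density `sin ψ ^ m`. -/
noncomputable def spherePolarLaplacian (m : ℕ) (f : ℝ → ℝ) (ψ : ℝ) : ℝ :=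
  -(sin ψ ^ m)⁻¹ * deriv (fun θ => sin θ ^ m * deriv f θ) ψ

lemma hasDerivAt_cos_rpow (p : ℝ) {x : ℝ} (hx : cos x ≠ 0) :
    HasDerivAt (fun y => cos y ^ p) (-p * (sin x * cos x ^ (p - 1))) x := by
  convert (hasDerivAt_cos x).rpow_const (p := p) (Or.inl hx) using 1
  ring

lemma hasDerivAt_sin_pow_mul_cos_rpow (m : ℕ) (p : ℝ) {x : ℝ} (hx : cos x ≠ 0) :
    HasDerivAt (fun y => sin y ^ (m + 1) * cos y ^ p)
      (sin x ^ m * ((p + m + 1) * cos x ^ (p + 1) - p * cos x ^ (p - 1))) x := by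
  have hsucc : cos x ^ (p + 1) = cos x ^ (p - 1) * cos x ^ 2 := by
    rw [← rpow_add_natCast hx]
    ring_nf
  have hself : cos x ^ p = cos x ^ (p - 1) * cos x := by
    rw [← rpow_add_one hx, sub_add_cancel]
  refine (((hasDerivAt_sin x).fun_pow (m + 1)).fun_mul (hasDerivAt_cos_rpow p hx)).congr_deriv ?_
  rw [hsucc, hself, Nat.add_sub_cancel]
  push_cast
  linear_combination (-p) * sin x ^ m * cos x ^ (p - 1) * sin_sq_add_cos_sq x

lemma spherePolarLaplacian_cos_rpow (m : ℕ) (p : ℝ) {x : ℝ} (hs : sin x ≠ 0) (hc : cos x ≠ 0) :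
    spherePolarLaplacian m (fun y => cos y ^ p) x =
      p * (p + m) * cos x ^ p - p * (p - 1) * cos x ^ (p - 2) := by
  have hflux : (fun y => sin y ^ m * deriv (fun z => cos z ^ p) y) =ᶠ[nhds x]
      fun y => -p * (sin y ^ (m + 1) * cos y ^ (p - 1)) := by
    filter_upwards [continuous_cos.continuousAt.eventually_ne hc] with y hy
    rw [(hasDerivAt_cos_rpow p hy).deriv]
    ring
  have hderiv := (hasDerivAt_sin_pow_mul_cos_rpow m (p - 1) hc).const_mul (-p)
  rw [spherePolarLaplacian, hflux.deriv_eq, hderiv.deriv, sub_add_cancel, sub_sub,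
    one_add_one_eq_two]
  field_simp
  ring

theorem hemisphere_eigenfunction_5d_general (m : ℕ) (j : ℝ) {ψ : ℝ} (hs : sin ψ ≠ 0)
    (hc : cos ψ ≠ 0) :
    spherePolarLaplacian m (fun θ => cos θ ^ (j + 1)) ψ
        + j * (j + 1) * (cos ψ ^ 2)⁻¹ * cos ψ ^ (j + 1)
      = (j + 1) * (j + 1 + m) * cos ψ ^ (j + 1) := by
  have hpow : cos ψ ^ (j + 1 - 2) = (cos ψ ^ 2)⁻¹ * cos ψ ^ (j + 1) := by
    rw [← Nat.cast_ofNat, rpow_sub_natCast hc, div_eq_inv_mul]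
  rw [spherePolarLaplacian_cos_rpow m (j + 1) hs hc, hpow]
  ring

/-- For `j ≥ 0`, in the five-dimensional setting, `f(ψ) = cos^{j+1}ψ` is an eigenfunction,
with eigenvalue `(j+1)(j+4)`, of the operator `W = Δ_{S⁴} + j(j+1)/cos²ψ` on the
hemisphere, restricted to functions of the polar angle `ψ`. -/
theorem hemisphere_eigenfunction_5d (j : ℝ) (hj : 0 ≤ j)
    (f : ℝ → ℝ) (hf : ∀ ψ, f ψ = (Real.cos ψ) ^ (j + 1)) :
    ∀ ψ ∈ Set.Ioo (0 : ℝ) (π / 2),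
      -((Real.sin ψ) ^ 3)⁻¹ * deriv (fun ψ => (Real.sin ψ) ^ 3 * deriv f ψ) ψ
        + j * (j + 1) * ((Real.cos ψ) ^ 2)⁻¹ * f ψ
      = (j + 1) * (j + 4) * f ψ := by
  intro ψ hψ
  obtain rfl : f = fun θ => cos θ ^ (j + 1) := funext hf
  have hs : 0 < sin ψ := sin_pos_of_pos_of_lt_pi hψ.1 (by linarith [hψ.2, pi_pos])
  have hc : 0 < cos ψ := cos_pos_of_mem_Ioo ⟨by linarith [hψ.1, pi_pos], hψ.2⟩
  have heigenvalue : j + 4 = j + 1 + (3 : ℕ) := by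
    push_cast
    ring
  rw [heigenvalue]
  exact hemisphere_eigenfunction_5d_general 3 j hs.ne' hc.ne'
end

section
/- Let t₁, t₂, t₃ be matrices satisfying the su(2) commutation relations. On {y ∈ ℝ : y > 0}, define the antisymmetric array B_{μν}(y) for μ,ν ∈ {0,1,2,3} by B_{0a}(y) = y⁻¹ t_a = −B_{a0}(y) for a = 1,2,3, B_{ab}(y) = y⁻¹ Σ_{c} ε_{abc} t_c for a,b ∈ {1,2,3}, and B_{μμ} = 0. Then for all y > 0 and all μ,ν ∈ {0,1,2,3}: Σ_{σ=0}^{3} [B_{μσ}(y), B_{νσ}(y)] + 2 · B_{μν}′(y) = 0. (Together with F = 0 for the zero connection, this says that the five-dimensional Nahm pole solution A = 0, B_{0a} = t_a/y, B_{ab} = ε_{abc}t_c/y solves the five-dimensional equations F⁺ − (1/4)B×B − (1/2)D_yB = 0, F_{yμ} + D^νB_{νμ} = 0, where (B×B)_{μν} = Σ_σ [B_{μσ}, B_{νσ}].) -/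
attribute [local instance] Matrix.normedAddCommGroup Matrix.normedSpace

/-- The constant antisymmetric array `b_{μν}` with `b_{0a} = t_a = −b_{a0}`,
`b_{ab} = Σ_c ε_{abc} t_c`, `b_{μμ} = 0` (indices `μ,ν ∈ {0,1,2,3}`, `a,b ∈ {1,2,3}`). -/
noncomputable def Bconst {n : ℕ} (t : Fin 3 → Matrix (Fin n) (Fin n) ℂ) (μ ν : Fin 4) :
    Matrix (Fin n) (Fin n) ℂ :=
  if hμ : μ.val = 0 then
    (if hν : ν.val = 0 then 0 else t ⟨ν.val - 1, by have := ν.isLt; omega⟩)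
  else if hν : ν.val = 0 then
    -t ⟨μ.val - 1, by have := μ.isLt; omega⟩
  else
    ∑ c, eps3 ⟨μ.val - 1, by have := μ.isLt; omega⟩ ⟨ν.val - 1, by have := ν.isLt; omega⟩ c
        • t c

/-!
The array is `b_{μν} = Σ_a η^a_{μν} t_a` for the self-dual 't Hooft symbols `η^a`. As 4 × 4 matrices
these are a quaternion triple up to sign, so `η^a (η^b)ᵀ - η^b (η^a)ᵀ = 2 ε_{abc} η^c`, and
contracting with `[t_a, t_b] = ε_{abc} t_c` gives the quadratic identity
`Σ_σ [b_{μσ}, b_{νσ}] = 2 b_{μν}`. Since `(y⁻¹)' = -(y⁻¹)²`, this identity is exactly the equation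
for `B = y⁻¹ b`.
-/

open scoped Matrix

section LieRing

variable {ι R L : Type*} [CommRing R] [LieRing L] [LieAlgebra R L]

/-- The commutation relations of `su(2)`, satisfied by three elements of a Lie ring. The sums of
indices are modulo `3`, so the three instances are the cyclic permutations of `⁅t 0, t 1⁆ = t 2`. -/
def IsSu2Triple_s13 (t : Fin 3 → L) : Prop :=
  ∀ a, ⁅t a, t (a + 1)⁆ = t (a + 2)

theorem isSu2Triple_iff {t : Fin 3 → L} :
    IsSu2Triple_s13 t ↔ ⁅t 0, t 1⁆ = t 2 ∧ ⁅t 1, t 2⁆ = t 0 ∧ ⁅t 2, t 0⁆ = t 1 := by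
  simp [IsSu2Triple_s13, Fin.forall_fin_succ]

theorem sum_sum_smul_lie_eq_sum_cyclic {R L : Type*} [Ring R] [LieRing L] [Module R L]
    (M : Matrix (Fin 3) (Fin 3) R) (t : Fin 3 → L) :
    ∑ a, ∑ b, M a b • ⁅t a, t b⁆ = ∑ a, (M a (a + 1) - M (a + 1) a) • ⁅t a, t (a + 1)⁆ := by
  have h10 : ⁅t 1, t 0⁆ = -⁅t 0, t 1⁆ := (lie_skew _ _).symm
  have h21 : ⁅t 2, t 1⁆ = -⁅t 1, t 2⁆ := (lie_skew _ _).symm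
  have h02 : ⁅t 0, t 2⁆ = -⁅t 2, t 0⁆ := (lie_skew _ _).symm
  simp only [Fin.sum_univ_three, Fin.reduceAdd, lie_self, h10, h21, h02, smul_zero, smul_neg,
    sub_smul]
  abel

theorem sum_lie_sum_smul_eq_sum_mul_transpose [Fintype ι] (η : Fin 3 → Matrix ι ι R)
    (t : Fin 3 → L) (μ ν : ι) :
    ∑ σ, ⁅∑ a, η a μ σ • t a, ∑ b, η b ν σ • t b⁆ =
      ∑ a, ∑ b, (η a * (η b)ᵀ) μ ν • ⁅t a, t b⁆ := by
  simp_rw [sum_lie_sum, smul_lie, lie_smul, smul_smul, Matrix.mul_apply, Matrix.transpose_apply,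
    Finset.sum_smul]
  rw [Finset.sum_comm]
  exact Finset.sum_congr rfl fun a _ => Finset.sum_comm

theorem IsSu2Triple_s13.sum_lie_sum_smul [Fintype ι] {η : Fin 3 → Matrix ι ι R}
    (hη : ∀ a, η a * (η (a + 1))ᵀ - η (a + 1) * (η a)ᵀ = 2 • η (a + 2))
    {t : Fin 3 → L} (ht : IsSu2Triple_s13 t) (μ ν : ι) :
    ∑ σ, ⁅∑ a, η a μ σ • t a, ∑ b, η b ν σ • t b⁆ = 2 • ∑ a, η a μ ν • t a := by
  calc ∑ σ, ⁅∑ a, η a μ σ • t a, ∑ b, η b ν σ • t b⁆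
      = ∑ a, ∑ b, (η a * (η b)ᵀ) μ ν • ⁅t a, t b⁆ :=
        sum_lie_sum_smul_eq_sum_mul_transpose η t μ ν
    _ = ∑ a, (η a * (η (a + 1))ᵀ - η (a + 1) * (η a)ᵀ) μ ν • ⁅t a, t (a + 1)⁆ :=
        sum_sum_smul_lie_eq_sum_cyclic (fun a b => (η a * (η b)ᵀ) μ ν) t
    _ = 2 • ∑ a, η (a + 2) μ ν • t (a + 2) := by
        simp only [hη, ht _, Matrix.smul_apply, smul_assoc, Finset.smul_sum]
    _ = 2 • ∑ a, η a μ ν • t a :=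
        congrArg (2 • ·) (Equiv.sum_comp (Equiv.addRight (2 : Fin 3)) fun a => η a μ ν • t a)

end LieRing

section TopologicalVectorSpace

variable {𝕜 E : Type*} [NontriviallyNormedField 𝕜] [AddCommGroup E] [Module 𝕜 E]
  [TopologicalSpace E] [ContinuousSMul 𝕜 E]

theorem hasDerivAt_smul_const_tvs {f : 𝕜 → 𝕜} {f' x : 𝕜} (hf : HasDerivAt f f' x) (v : E) :
    HasDerivAt (fun z => f z • v) (f' • v) x := by
  rw [hasDerivAt_iff_hasFDerivAt, hasFDerivAt_iff_isLittleOTVS] at hf ⊢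
  convert (ContinuousLinearMap.toSpanSingleton 𝕜 v).isBigOTVS_comp.trans_isLittleOTVS hf using 2
  simp [sub_smul, mul_smul]

theorem deriv_inv_smul_const [ContinuousAdd E] [T2Space E] {y : 𝕜} (hy : y ≠ 0) (v : E) :
    deriv (fun z : 𝕜 => z⁻¹ • v) y = -(y ^ 2)⁻¹ • v := by
  have h := (hasDerivAt_smul_const_tvs (hasDerivAt_inv hy) v).hasFDerivAt.fderiv
  rw [deriv, h]
  simp

end TopologicalVectorSpace

section NahmPole

variable {L : Type*} [LieRing L]

/-- The self-dual 't Hooft symbols `η^a_{μν}`, antisymmetric in `μ, ν` with `η^a_{0b} = δ_{ab}` and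
`η^a_{bc} = ε_{abc}`, each written as a matrix in `μ, ν`; the labels `a = 1, 2, 3` are shifted to
`Fin 3`. -/
def tHooft : Fin 3 → Matrix (Fin 4) (Fin 4) ℤ
  | 0 => !![0, 1, 0, 0; -1, 0, 0, 0; 0, 0, 0, 1; 0, 0, -1, 0]
  | 1 => !![0, 0, 1, 0; 0, 0, 0, -1; -1, 0, 0, 0; 0, 1, 0, 0]
  | 2 => !![0, 0, 0, 1; 0, 0, 1, 0; 0, -1, 0, 0; -1, 0, 0, 0]

theorem tHooft_mul_transpose_sub (a : Fin 3) :
    tHooft a * (tHooft (a + 1))ᵀ - tHooft (a + 1) * (tHooft a)ᵀ = 2 • tHooft (a + 2) := by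
  decide +revert

/-- The self-dual array `b_{μν} = Σ_a η^a_{μν} t_a` of coefficients of the five-dimensional Nahm
pole, for `t` in any Lie ring. -/
def tHooftArray (t : Fin 3 → L) (μ ν : Fin 4) : L :=
  ∑ a, tHooft a μ ν • t a

theorem IsSu2Triple_s13.sum_lie_tHooftArray {t : Fin 3 → L} (ht : IsSu2Triple_s13 t) (μ ν : Fin 4) :
    ∑ σ, ⁅tHooftArray t μ σ, tHooftArray t ν σ⁆ = 2 • tHooftArray t μ ν :=
  ht.sum_lie_sum_smul tHooft_mul_transpose_sub μ ν

variable {𝕜 : Type*} [NontriviallyNormedField 𝕜] [LieAlgebra 𝕜 L] [TopologicalSpace L]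
  [ContinuousAdd L] [ContinuousSMul 𝕜 L] [T2Space L]

theorem sum_lie_inv_smul_add_two_smul_deriv_eq_zero {ι : Type*} [Fintype ι] {b c : ι → L} {d : L}
    (h : ∑ σ, ⁅b σ, c σ⁆ = 2 • d) {y : 𝕜} (hy : y ≠ 0) :
    ∑ σ, ⁅y⁻¹ • b σ, y⁻¹ • c σ⁆ + 2 • deriv (fun z : 𝕜 => z⁻¹ • d) y = 0 := by
  have hquad : ∑ σ, ⁅y⁻¹ • b σ, y⁻¹ • c σ⁆ = (y ^ 2)⁻¹ • 2 • d := by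
    simp only [smul_lie, lie_smul, smul_smul, ← Finset.smul_sum, h, sq, mul_inv]
  rw [hquad, deriv_inv_smul_const hy]
  module

theorem five_dim_nahm_pole_general {t : Fin 3 → L} (ht : IsSu2Triple_s13 t) {y : 𝕜} (hy : y ≠ 0)
    (μ ν : Fin 4) :
    ∑ σ, ⁅y⁻¹ • tHooftArray t μ σ, y⁻¹ • tHooftArray t ν σ⁆ +
      2 • deriv (fun z : 𝕜 => z⁻¹ • tHooftArray t μ ν) y = 0 :=
  sum_lie_inv_smul_add_two_smul_deriv_eq_zero (ht.sum_lie_tHooftArray μ ν) hy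

end NahmPole

attribute [local instance] LieRing.ofAssociativeRing

theorem Bconst_eq_tHooftArray {n : ℕ} (t : Fin 3 → Matrix (Fin n) (Fin n) ℂ) :
    Bconst t = tHooftArray t := by
  funext μ ν
  fin_cases μ <;> fin_cases ν <;>
    norm_num [Bconst, eps3, tHooftArray, tHooft, Fin.sum_univ_three] <;> rfl

theorem inv_ofReal_smul_Bconst {n : ℕ} (t : Fin 3 → Matrix (Fin n) (Fin n) ℂ) (y : ℝ)
    (μ ν : Fin 4) : (y : ℂ)⁻¹ • Bconst t μ ν = y⁻¹ • tHooftArray t μ ν := by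
  rw [Bconst_eq_tHooftArray, ← Complex.ofReal_inv, Complex.coe_smul]

/-- The five-dimensional Nahm pole solution: with `A = 0` and
`B_{0a} = t_a/y`, `B_{ab} = ε_{abc}t_c/y`, the field `B` satisfies
`Σ_σ [B_{μσ}, B_{νσ}] + 2 B'_{μν} = 0`, which (together with `F = 0` for the zero
connection) says that it solves the five-dimensional equations
`F⁺ − (1/4)B×B − (1/2)D_yB = 0`, `F_{yμ} + DᵛB_{νμ} = 0`. -/
theorem five_dim_nahm_pole {n : ℕ} (t : Fin 3 → Matrix (Fin n) (Fin n) ℂ)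
    (h12 : t 0 * t 1 - t 1 * t 0 = t 2)
    (h23 : t 1 * t 2 - t 2 * t 1 = t 0)
    (h31 : t 2 * t 0 - t 0 * t 2 = t 1)
    (B : ℝ → Fin 4 → Fin 4 → Matrix (Fin n) (Fin n) ℂ)
    (hB : ∀ y μ ν, B y μ ν = ((y : ℂ))⁻¹ • Bconst t μ ν) :
    ∀ y : ℝ, 0 < y → ∀ μ ν : Fin 4,
      (∑ σ, (B y μ σ * B y ν σ - B y ν σ * B y μ σ))
        + (2 : ℂ) • deriv (fun y => B y μ ν) y = 0 := by
  intro y hy μ ν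
  simpa only [hB, inv_ofReal_smul_Bconst, Ring.lie_def, two_smul] using
    five_dim_nahm_pole_general (isSu2Triple_iff.2 ⟨h12, h23, h31⟩) hy.ne' μ ν
end

section
/- Let A, φ : Ω → (Fin 4 → Matrix (Fin n) (Fin n) ℂ) be smooth maps on an open set Ω ⊆ ℝ⁴ satisfying the KW equations. Define five-dimensional fields on Ω, independent of an auxiliary time coordinate x₀ (so ∂₀ ≡ 0): the connection components 𝔸₀ := −φ₄, 𝔸_a := A_a for a = 1,2,3, 𝔸_y := A₄; and the antisymmetric array B_{μν} for μ,ν ∈ {0,1,2,3} with B_{0a} := φ_a and B_{ab} := Σ_c ε_{abc} φ_c. Let 𝔽 denote the curvature of 𝔸 computed with ∂₀ ≡ 0 (e.g. 𝔽_{0a} = −∂_a𝔸₀ + [𝔸₀,𝔸_a], 𝔽_{y0} = ∂₄𝔸₀ + [𝔸_y, 𝔸₀], 𝔽_{ab}, 𝔽_{yb} as usual), let (𝔽⁺)_{μν} = (1/2)( 𝔽_{μν} + (1/2) Σ_{σ,τ} ε°_{μνστ} 𝔽_{στ} ) where ε°is the Levi-Civita symbol on indices {0,1,2,3} with ε°₀₁₂₃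 = 1, let (B×B)_{μν} = Σ_{σ=0}^{3} [B_{μσ}, B_{νσ}], and let D_ν act by D_ν X = ∂_ν X + [𝔸_ν, X] (with ∂₀ ≡ 0) and D_y X = ∂₄ X + [𝔸_y, X]. Then on Ω: (𝔽⁺)_{μν} − (1/4)(B×B)_{μν} − (1/2) D_y B_{μν} = 0 for all μ,ν ∈ {0,1,2,3}, and 𝔽_{yμ} + Σ_{ν=0}^{3} D_ν B_{νμ} = 0 for all μ ∈ {0,1,2,3}. (Every solution of the four-dimensional KW equations yields a time-independent solution of the five-dimensional equations.) -/
attribute [local instance] Matrix.normedAddCommGroup Matrix.normedSpace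

/-- The 5d connection components `𝔸_μ`, `μ ∈ {0,1,2,3}` (index `0` is time):
`𝔸₀ = −φ₄`, `𝔸_a = A_a` for `a = 1,2,3`. -/
noncomputable def A5 {n : ℕ} (A φ : (Fin 4 → ℝ) → Fin 4 → Matrix (Fin n) (Fin n) ℂ)
    (x : Fin 4 → ℝ) (μ : Fin 4) : Matrix (Fin n) (Fin n) ℂ :=
  if μ.val = 0 then -φ x 3 else A x ⟨μ.val - 1, by have := μ.isLt; omega⟩

/-- The 5d antisymmetric field `B_{μν}`: `B_{0a} = φ_a`, `B_{a0} = −φ_a`,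
`B_{ab} = Σ_c ε_{abc} φ_c` (5d spatial index `a ∈ {1,2,3}` corresponds to `φ` index
`a−1 ∈ {0,1,2}`). -/
noncomputable def B5 {n : ℕ} (φ : (Fin 4 → ℝ) → Fin 4 → Matrix (Fin n) (Fin n) ℂ)
    (x : Fin 4 → ℝ) (μ ν : Fin 4) : Matrix (Fin n) (Fin n) ℂ :=
  if hμ : μ.val = 0 then
    (if hν : ν.val = 0 then 0 else φ x ⟨ν.val - 1, by have := ν.isLt; omega⟩)
  else if hν : ν.val = 0 then
    -φ x ⟨μ.val - 1, by have := μ.isLt; omega⟩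
  else
    ∑ c : Fin 3,
      eps3 ⟨μ.val - 1, by have := μ.isLt; omega⟩ ⟨ν.val - 1, by have := ν.isLt; omega⟩ c
        • φ x ⟨c.val, by have := c.isLt; omega⟩

/-- The 5d partial derivative `∂_μ`, `μ ∈ {0,1,2,3}`, for time-independent fields:
`∂₀ ≡ 0`, and `∂_a` is the derivative in the `a`-th spatial coordinate. -/
noncomputable def pd5 {n : ℕ} (μ : Fin 4) (f : (Fin 4 → ℝ) → Matrix (Fin n) (Fin n) ℂ)
    (x : Fin 4 → ℝ) : Matrix (Fin n) (Fin n) ℂ :=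
  if μ.val = 0 then 0 else pd4 ⟨μ.val - 1, by have := μ.isLt; omega⟩ f x

/-- The curvature `𝔽_{μν}` of the 5d connection `𝔸` (with `∂₀ ≡ 0`). -/
noncomputable def F5 {n : ℕ} (A φ : (Fin 4 → ℝ) → Fin 4 → Matrix (Fin n) (Fin n) ℂ)
    (μ ν : Fin 4) (x : Fin 4 → ℝ) : Matrix (Fin n) (Fin n) ℂ :=
  pd5 μ (fun x => A5 A φ x ν) x - pd5 ν (fun x => A5 A φ x μ) x
    + (A5 A φ x μ * A5 A φ x ν - A5 A φ x ν * A5 A φ x μ)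

/-- The curvature component `𝔽_{yμ} = ∂_y 𝔸_μ − ∂_μ 𝔸_y + [𝔸_y, 𝔸_μ]`, where `𝔸_y = A₄`. -/
noncomputable def F5y {n : ℕ} (A φ : (Fin 4 → ℝ) → Fin 4 → Matrix (Fin n) (Fin n) ℂ)
    (μ : Fin 4) (x : Fin 4 → ℝ) : Matrix (Fin n) (Fin n) ℂ :=
  pd4 3 (fun x => A5 A φ x μ) x - pd5 μ (fun x => A x 3) x
    + (A x 3 * A5 A φ x μ - A5 A φ x μ * A x 3)

/-!
A self-dual array is determined by its time components `T_{0a}`, and `B` is the one with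
`B_{0a} = φ_a`. Covariant differentiation acts componentwise, and both `𝔽⁺` and `B×B` are
self-dual, so the first five-dimensional equation reduces to its three time components. Since
`𝔽_{0a} = D_a φ₄` and `Σ_{b,c} ε_{abc} Σ_{k,l} ε_{bckl} D_k φ_l = 2 (D_a φ₄ - D₄ φ_a)`, these
are one quarter of the contraction of the first KW equation with `ε_{abc}`. The second
five-dimensional equation is the `y`-row of the first KW equation for `μ ≠ 0` and the divergence
equation for `μ = 0`.
-/

section SelfDualForm

variable {M : Type*} [AddCommGroup M] [Module ℂ M]

/-- The self-dual array `T` with prescribed time components `T_{0a} = v_a`, hence with spatial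
components `T_{ab} = Σ_c ε_{abc} v_c`. The spatial index `a` is `a.succ` as an index of `T`. -/
noncomputable def selfDualForm : (Fin 3 → M) →ₗ[ℂ] Fin 4 → Fin 4 → M where
  toFun v := Fin.cons (Fin.cons 0 v) fun a => Fin.cons (-v a) fun b => ∑ c, eps3 a b c • v c
  map_add' v w := by
    ext μ ν
    cases μ using Fin.cases <;> cases ν using Fin.cases <;>
      simp [Finset.sum_add_distrib, add_comm]
  map_smul' r v := by
    ext μ ν
    cases μ using Fin.cases <;> cases ν using Fin.cases <;>
      simp [Finset.smul_sum, smul_comm r]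

/-- The self-dual part `T⁺ = (T + ⋆T) / 2` of an array of components, where
`(⋆T)_{μν} = (1/2) Σ_{σ,τ} ε_{μνστ} T_{στ}`. -/
noncomputable def selfDualPart (T : Fin 4 → Fin 4 → M) (μ ν : Fin 4) : M :=
  (1 / 2 : ℂ) • (T μ ν + (1 / 2 : ℂ) • ∑ σ, ∑ τ, eps4 μ ν σ τ • T σ τ)

@[simp]
theorem selfDualForm_zero_zero (v : Fin 3 → M) : selfDualForm v 0 0 = 0 := rfl

@[simp]
theorem selfDualForm_zero_succ (v : Fin 3 → M) (a : Fin 3) : selfDualForm v 0 a.succ = v a := rfl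

@[simp]
theorem selfDualForm_succ_zero (v : Fin 3 → M) (a : Fin 3) : selfDualForm v a.succ 0 = -v a := rfl

@[simp]
theorem selfDualForm_succ_succ (v : Fin 3 → M) (a b : Fin 3) :
    selfDualForm v a.succ b.succ = ∑ c, eps3 a b c • v c := rfl

theorem map_selfDualForm {N : Type*} [AddCommGroup N] [Module ℂ N] (f : M →ₗ[ℂ] N)
    (v : Fin 3 → M) (μ ν : Fin 4) :
    f (selfDualForm v μ ν) = selfDualForm (fun c => f (v c)) μ ν := by
  cases μ using Fin.cases <;> cases ν using Fin.cases <;>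
    simp

theorem selfDualForm_eq_matrix (v : Fin 3 → M) :
    selfDualForm v =
      ![![0, v 0, v 1, v 2],
        ![-v 0, 0, v 2, -v 1],
        ![-v 1, -v 2, 0, v 0],
        ![-v 2, v 1, -v 0, 0]] := by
  ext μ ν
  cases μ using Fin.cases with
  | zero => cases ν using Fin.cases with
    | zero => rfl
    | succ b => rw [selfDualForm_zero_succ]; fin_cases b <;> rfl
  | succ a => cases ν using Fin.cases with
    | zero => rw [selfDualForm_succ_zero]; fin_cases a <;> rfl
    | succ b =>
      rw [selfDualForm_succ_succ]
      fin_cases a <;> fin_cases b <;> norm_num [eps3, Fin.sum_univ_three] <;> rfl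

theorem selfDualPart_eq_selfDualForm {T : Fin 4 → Fin 4 → M} (hT : ∀ μ ν, T μ ν = -T ν μ) :
    selfDualPart T =
      selfDualForm fun a => (1 / 2 : ℂ) •
        (T 0 a.succ + (1 / 2 : ℂ) • ∑ b, ∑ c, eps3 a b c • T b.succ c.succ) := by
  have : IsAddTorsionFree M := .of_isTorsionFree ℂ M
  have hdiag (μ : Fin 4) : T μ μ = 0 := self_eq_neg.mp (hT μ μ)
  ext μ ν
  rw [selfDualForm_eq_matrix]
  fin_cases μ <;> fin_cases ν <;>
    simp [selfDualPart, eps3, eps4, Fin.sum_univ_three, Fin.sum_univ_four, hdiag,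
      hT 1 0, hT 2 0, hT 3 0, hT 2 1, hT 3 1, hT 3 2] <;>
    norm_num <;>
    module

theorem sum_selfDualForm_zero (w : Fin 4 → Fin 3 → M) :
    ∑ ν, selfDualForm (w ν) ν 0 = -∑ a : Fin 3, w a.succ a := by
  simp [Fin.sum_univ_succ (n := 3)]

theorem sum_selfDualForm_succ (w : Fin 4 → Fin 3 → M) (a : Fin 3) :
    ∑ ν, selfDualForm (w ν) ν a.succ = w 0 a + ∑ b : Fin 3, ∑ c, eps3 b a c • w b.succ c := by
  simp [Fin.sum_univ_succ (n := 3)]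

theorem sum_eps3_smul_sum_eps4_smul (T : Fin 4 → Fin 4 → M) (a : Fin 3) :
    ∑ b, ∑ c, eps3 a b c • ∑ k, ∑ l, eps4 b.castSucc c.castSucc k l • T k l =
      (2 : ℂ) • (T a.castSucc 3 - T 3 a.castSucc) := by
  fin_cases a <;> simp [eps3, eps4, Fin.sum_univ_three, Fin.sum_univ_four] <;> norm_num <;> module

theorem sum_eps4_last_smul (T : Fin 4 → Fin 4 → M) (a : Fin 3) :
    ∑ k, ∑ l, eps4 3 a.castSucc k l • T k l =
      ∑ b : Fin 3, ∑ c, eps3 b a c • T b.castSucc c.castSucc := by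
  fin_cases a <;> simp [eps3, eps4, Fin.sum_univ_three, Fin.sum_univ_four] <;> norm_num

end SelfDualForm

theorem sum_lie_selfDualForm {L : Type*} [LieRing L] [LieAlgebra ℂ L] (v : Fin 3 → L)
    (μ ν : Fin 4) :
    ∑ σ, ⁅selfDualForm v μ σ, selfDualForm v ν σ⁆ =
      selfDualForm (fun a => ∑ b, ∑ c, eps3 a b c • ⁅v b, v c⁆) μ ν := by
  simp only [selfDualForm_eq_matrix]
  fin_cases μ <;> fin_cases ν <;> simp [eps3, Fin.sum_univ_three, Fin.sum_univ_four] <;> norm_num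

theorem differentiableAt_comp_update {E : Type*} [NormedAddCommGroup E] [NormedSpace ℝ E]
    {ι : Type*} [Finite ι] [DecidableEq ι] {f : (ι → ℝ) → E} {x : ι → ℝ}
    (hf : DifferentiableAt ℝ f x) (i : ι) :
    DifferentiableAt ℝ (fun t => f (Function.update x i t)) (x i) := by
  cases nonempty_fintype ι
  have hupdate := (hasDerivAt_update x i (x i)).differentiableAt
  exact DifferentiableAt.comp (x i) (by rwa [Function.update_eq_self]) hupdate

section Fields

attribute [local instance] LieRing.ofAssociativeRing

variable {n : ℕ} {A φ : (Fin 4 → ℝ) → Fin 4 → Matrix (Fin n) (Fin n) ℂ} {x : Fin 4 → ℝ}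

theorem pd4_neg (i : Fin 4) (f : (Fin 4 → ℝ) → Matrix (Fin n) (Fin n) ℂ) :
    pd4 i (fun x => -f x) x = -pd4 i f x :=
  deriv.fun_neg

theorem pd4_linearMap_apply {ι : Type*} [Finite ι] {i : Fin 4}
    (ℓ : (ι → Matrix (Fin n) (Fin n) ℂ) →ₗ[ℝ] Matrix (Fin n) (Fin n) ℂ)
    {v : (Fin 4 → ℝ) → ι → Matrix (Fin n) (Fin n) ℂ}
    (hv : ∀ c, DifferentiableAt ℝ (fun t => v (Function.update x i t) c) (x i)) :
    pd4 i (fun x => ℓ (v x)) x = ℓ fun c => pd4 i (fun x => v x c) x := by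
  cases nonempty_fintype ι
  have hderiv := hasDerivAt_pi.mpr fun c => (hv c).hasDerivAt
  exact (ℓ.toContinuousLinearMap.hasFDerivAt.comp_hasDerivAt (x i) hderiv).deriv

/-- The covariant derivative `D_i X = ∂_i X + [A_i, X]` of a single matrix-valued field. -/
noncomputable def covDeriv (A : (Fin 4 → ℝ) → Fin 4 → Matrix (Fin n) (Fin n) ℂ) (i : Fin 4)
    (X : (Fin 4 → ℝ) → Matrix (Fin n) (Fin n) ℂ) (x : Fin 4 → ℝ) : Matrix (Fin n) (Fin n) ℂ :=
  pd4 i X x + ⁅A x i, X x⁆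

/-- The five-dimensional covariant derivative `D_ν X = ∂_ν X + [𝔸_ν, X]`, `ν ∈ {0,1,2,3}`, of a
time-independent field; the remaining one, `D_y`, is `covDeriv A 3`. -/
noncomputable def covDeriv5 (A φ : (Fin 4 → ℝ) → Fin 4 → Matrix (Fin n) (Fin n) ℂ) (ν : Fin 4)
    (X : (Fin 4 → ℝ) → Matrix (Fin n) (Fin n) ℂ) (x : Fin 4 → ℝ) : Matrix (Fin n) (Fin n) ℂ :=
  pd5 ν X x + ⁅A5 A φ x ν, X x⁆

/-- The left-hand side of the first KW equation,
`F_{ij} - [φ_i, φ_j] + Σ_{k,l} ε_{ijkl} D_k φ_l`. -/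
noncomputable def kwTensor (A φ : (Fin 4 → ℝ) → Fin 4 → Matrix (Fin n) (Fin n) ℂ) (i j : Fin 4)
    (x : Fin 4 → ℝ) : Matrix (Fin n) (Fin n) ℂ :=
  curv A i j x - ⁅φ x i, φ x j⁆ + ∑ k, ∑ l, eps4 i j k l • covD A φ k l x

theorem covDeriv_component (i j : Fin 4) :
    covDeriv A i (fun x => φ x j) x = covD A φ i j x :=
  rfl

theorem A5_zero : A5 A φ x 0 = -φ x 3 := rfl

theorem A5_succ (a : Fin 3) : A5 A φ x a.succ = A x a.castSucc := rfl

theorem pd5_zero (X : (Fin 4 → ℝ) → Matrix (Fin n) (Fin n) ℂ) : pd5 0 X x = 0 := rfl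

theorem pd5_succ (a : Fin 3) (X : (Fin 4 → ℝ) → Matrix (Fin n) (Fin n) ℂ) :
    pd5 a.succ X x = pd4 a.castSucc X x :=
  rfl

theorem covDeriv5_zero (X : (Fin 4 → ℝ) → Matrix (Fin n) (Fin n) ℂ) :
    covDeriv5 A φ 0 X x = -⁅φ x 3, X x⁆ := by
  rw [covDeriv5, pd5_zero, A5_zero, zero_add, neg_lie]

theorem covDeriv5_succ (a : Fin 3) (X : (Fin 4 → ℝ) → Matrix (Fin n) (Fin n) ℂ) :
    covDeriv5 A φ a.succ X x = covDeriv A a.castSucc X x :=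
  rfl

theorem F5_antisymm (μ ν : Fin 4) : F5 A φ μ ν x = -F5 A φ ν μ x := by
  unfold F5
  abel

theorem F5_zero_succ (a : Fin 3) : F5 A φ 0 a.succ x = covD A φ a.castSucc 3 x := by
  simp only [F5, covD, A5_zero, A5_succ, pd5_zero, pd5_succ, pd4_neg]
  noncomm_ring

theorem F5_succ_succ (a b : Fin 3) :
    F5 A φ a.succ b.succ x = curv A a.castSucc b.castSucc x :=
  rfl

theorem F5y_zero : F5y A φ 0 x = -covD A φ 3 3 x := by
  simp only [F5y, covD, A5_zero, pd5_zero, pd4_neg]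
  noncomm_ring

theorem F5y_succ (a : Fin 3) : F5y A φ a.succ x = curv A 3 a.castSucc x :=
  rfl

theorem B5_eq_selfDualForm : B5 φ x = selfDualForm fun c => φ x c.castSucc := by
  refine funext₂ fun μ ν => ?_
  cases μ using Fin.cases <;> cases ν using Fin.cases <;> rfl

theorem covDeriv_selfDualForm {i : Fin 4} {v : (Fin 4 → ℝ) → Fin 3 → Matrix (Fin n) (Fin n) ℂ}
    (hv : ∀ c, DifferentiableAt ℝ (fun t => v (Function.update x i t) c) (x i)) (μ ν : Fin 4) :
    covDeriv A i (fun x => selfDualForm (v x) μ ν) x =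
      selfDualForm (fun c => covDeriv A i (fun x => v x c) x) μ ν := by
  let component : (Fin 3 → Matrix (Fin n) (Fin n) ℂ) →ₗ[ℂ] Matrix (Fin n) (Fin n) ℂ :=
    LinearMap.proj ν ∘ₗ LinearMap.proj μ ∘ₗ selfDualForm
  have hpd : pd4 i (fun x => selfDualForm (v x) μ ν) x =
      selfDualForm (fun c => pd4 i (fun x => v x c) x) μ ν :=
    pd4_linearMap_apply (component.restrictScalars ℝ) hv
  have hlie : ⁅A x i, selfDualForm (v x) μ ν⁆ = selfDualForm (fun c => ⁅A x i, v x c⁆) μ ν :=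
    map_selfDualForm (LieAlgebra.ad ℂ _ (A x i)) (v x) μ ν
  rw [covDeriv, hpd, hlie, ← Pi.add_apply, ← Pi.add_apply, ← map_add]
  rfl

theorem covDeriv5_selfDualForm {v : (Fin 4 → ℝ) → Fin 3 → Matrix (Fin n) (Fin n) ℂ}
    (hv : ∀ i c, DifferentiableAt ℝ (fun t => v (Function.update x i t) c) (x i))
    (ρ μ ν : Fin 4) :
    covDeriv5 A φ ρ (fun x => selfDualForm (v x) μ ν) x =
      selfDualForm (fun c => covDeriv5 A φ ρ (fun x => v x c) x) μ ν := by
  cases ρ using Fin.cases with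
  | zero =>
    simp only [covDeriv5_zero]
    exact map_selfDualForm (-LieAlgebra.ad ℂ _ (φ x 3)) (v x) μ ν
  | succ a => exact covDeriv_selfDualForm (hv a.castSucc) μ ν

theorem sum_eps3_smul_kwTensor (a : Fin 3) :
    (1 / 4 : ℂ) • ∑ b, ∑ c, eps3 a b c • kwTensor A φ b.castSucc c.castSucc x =
      (1 / 2 : ℂ) • (F5 A φ 0 a.succ x
          + (1 / 2 : ℂ) • ∑ b, ∑ c, eps3 a b c • F5 A φ b.succ c.succ x)
        - (1 / 4 : ℂ) • ∑ b, ∑ c, eps3 a b c • ⁅φ x b.castSucc, φ x c.castSucc⁆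
        - (1 / 2 : ℂ) • covDeriv A 3 (fun x => φ x a.castSucc) x := by
  have hspatial_dual := sum_eps3_smul_sum_eps4_smul (fun k l => covD A φ k l x) a
  simp only [kwTensor, smul_add, smul_sub, Finset.sum_add_distrib, Finset.sum_sub_distrib,
    hspatial_dual, covDeriv_component, F5_zero_succ, F5_succ_succ]
  module

theorem selfDualPart_F5_sub_lie_sub_covDeriv
    (hφ : ∀ i j, DifferentiableAt ℝ (fun t => φ (Function.update x i t) j) (x i)) (μ ν : Fin 4) :
    selfDualPart (fun μ ν => F5 A φ μ ν x) μ ν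
        - (1 / 4 : ℂ) • ∑ σ, ⁅B5 φ x μ σ, B5 φ x ν σ⁆
        - (1 / 2 : ℂ) • covDeriv A 3 (fun x => B5 φ x μ ν) x =
      selfDualForm (fun a => (1 / 4 : ℂ) • ∑ b, ∑ c, eps3 a b c •
        kwTensor A φ b.castSucc c.castSucc x) μ ν := by
  have hDB := covDeriv_selfDualForm (A := A) (v := fun x c => φ x c.castSucc)
    (fun c => hφ 3 c.castSucc) μ ν
  have hF := selfDualPart_eq_selfDualForm (T := fun μ ν => F5 A φ μ ν x) F5_antisymm
  simp only [B5_eq_selfDualForm, sum_lie_selfDualForm, hDB, hF, sum_eps3_smul_kwTensor]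
  simp only [← Pi.sub_def, ← Pi.smul_def, map_sub, map_smul]
  rfl

theorem F5y_add_sum_covDeriv5_B5_zero
    (hφ : ∀ i j, DifferentiableAt ℝ (fun t => φ (Function.update x i t) j) (x i)) :
    F5y A φ 0 x + ∑ ν, covDeriv5 A φ ν (fun x => B5 φ x ν 0) x = -∑ i, covD A φ i i x := by
  have hDB (ν : Fin 4) := covDeriv5_selfDualForm (A := A) (φ := φ)
    (v := fun x c => φ x c.castSucc) (fun i c => hφ i c.castSucc) ν ν 0
  simp only [B5_eq_selfDualForm, hDB, sum_selfDualForm_zero, F5y_zero, covDeriv5_succ,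
    covDeriv_component]
  rw [Fin.sum_univ_castSucc (n := 3), neg_add_rev]
  rfl

theorem F5y_add_sum_covDeriv5_B5_succ
    (hφ : ∀ i j, DifferentiableAt ℝ (fun t => φ (Function.update x i t) j) (x i)) (a : Fin 3) :
    F5y A φ a.succ x + ∑ ν, covDeriv5 A φ ν (fun x => B5 φ x ν a.succ) x =
      kwTensor A φ 3 a.castSucc x := by
  have hDB (ν : Fin 4) := covDeriv5_selfDualForm (A := A) (φ := φ)
    (v := fun x c => φ x c.castSucc) (fun i c => hφ i c.castSucc) ν ν a.succ
  simp only [B5_eq_selfDualForm, hDB, sum_selfDualForm_succ, F5y_succ, covDeriv5_zero,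
    covDeriv5_succ, covDeriv_component, kwTensor, sum_eps4_last_smul]
  rw [sub_eq_add_neg, add_assoc]

theorem KW_solution_gives_five_dim_solution_general
    (hφ : ∀ i j, DifferentiableAt ℝ (fun t => φ (Function.update x i t) j) (x i))
    (hKW1 : ∀ i j, kwTensor A φ i j x = 0) (hKW2 : ∑ i, covD A φ i i x = 0) :
    (∀ μ ν, selfDualPart (fun μ ν => F5 A φ μ ν x) μ ν
        - (1 / 4 : ℂ) • ∑ σ, ⁅B5 φ x μ σ, B5 φ x ν σ⁆
        - (1 / 2 : ℂ) • covDeriv A 3 (fun x => B5 φ x μ ν) x = 0) ∧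
      ∀ μ, F5y A φ μ x + ∑ ν, covDeriv5 A φ ν (fun x => B5 φ x ν μ) x = 0 := by
  refine ⟨fun μ ν => ?_, Fin.cases ?_ fun a => ?_⟩
  · rw [selfDualPart_F5_sub_lie_sub_covDeriv hφ]
    simp only [hKW1, smul_zero, Finset.sum_const_zero]
    exact congrFun₂ (map_zero selfDualForm) μ ν
  · rw [F5y_add_sum_covDeriv5_B5_zero hφ, hKW2, neg_zero]
  · rw [F5y_add_sum_covDeriv5_B5_succ hφ, hKW1]

end Fields

/-- Every solution of the four-dimensional KW equations yields a time-independent solution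
of the five-dimensional equations `𝔽⁺ − (1/4)B×B − (1/2)D_yB = 0`,
`𝔽_{yμ} + DᵛB_{νμ} = 0`. -/
theorem KW_solution_gives_five_dim_solution {n : ℕ} (Ω : Set (Fin 4 → ℝ)) (hΩ : IsOpen Ω)
    (A φ : (Fin 4 → ℝ) → Fin 4 → Matrix (Fin n) (Fin n) ℂ)
    (hA : ∀ i, ContDiffOn ℝ (⊤ : ℕ∞) (fun x => A x i) Ω)
    (hφ : ∀ i, ContDiffOn ℝ (⊤ : ℕ∞) (fun x => φ x i) Ω)
    (hKW1 : ∀ x ∈ Ω, ∀ i j : Fin 4,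
      curv A i j x - (φ x i * φ x j - φ x j * φ x i)
        + ∑ k, ∑ l, eps4 i j k l • covD A φ k l x = 0)
    (hKW2 : ∀ x ∈ Ω, ∑ i, covD A φ i i x = 0) :
    ∀ x ∈ Ω,
      (∀ μ ν : Fin 4,
        (1 / 2 : ℂ) • (F5 A φ μ ν x + (1 / 2 : ℂ) • ∑ σ, ∑ τ, eps4 μ ν σ τ • F5 A φ σ τ x)
          - (1 / 4 : ℂ) • ∑ σ, (B5 φ x μ σ * B5 φ x ν σ - B5 φ x ν σ * B5 φ x μ σ)
          - (1 / 2 : ℂ) • (pd4 3 (fun x => B5 φ x μ ν) x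
              + (A x 3 * B5 φ x μ ν - B5 φ x μ ν * A x 3)) = 0)
      ∧ (∀ μ : Fin 4,
        F5y A φ μ x
          + ∑ ν, (pd5 ν (fun x => B5 φ x ν μ) x
              + (A5 A φ x ν * B5 φ x ν μ - B5 φ x ν μ * A5 A φ x ν)) = 0) :=
  fun x hx => KW_solution_gives_five_dim_solution_general
    (fun i j => differentiableAt_comp_update (((hφ j).contDiffAt (hΩ.mem_nhds hx)).differentiableAt
      (by simp)) i)
    (hKW1 x hx) (hKW2 x hx)
end

section
/- Fix background fields 𝐀_a, 𝛗_a : U → Matrix (Fin n) (Fin n) ℂ (a = 1,2,3) on an open set U ⊆ ℝ³ (corresponding to a solution with A_y = φ_y = 0), and set D_a X := ∂_a X + [𝐀_a, X]. For differentiable fields Ψ = (a, β, ϕ, γ) with a, ϕ : U → (Fin 3 → Matrix (Fin n) (Fin n) ℂ) and β, γ : U → Matrix (Fin n) (Fin n) ℂ, define BΨ := (P, Q, R, S) where P_a = −D_a γ − [β, 𝛗_a] − Σ_{b,c} ε_{abc}( D_b ϕ_c + [a_b, 𝛗_c] ), Q = Σ_a D_a ϕ_a − Σ_a [𝛗_a,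 a_a], R_a = [γ, 𝛗_a] − D_a β − Σ_{b,c} ε_{abc} D_b a_c + Σ_{b,c} ε_{abc} [𝛗_b, ϕ_c], and S = Σ_a D_a a_a + Σ_a [𝛗_a, ϕ_a]. Define the linear map N by N(a, β, ϕ, γ) := (ϕ, γ, −a, −β). Then B(NΨ) = −N(BΨ) for every differentiable Ψ. (Hence the linearized gauge-fixed KW operator L = ∂_y + B around any background with φ_y = A_y = 0 satisfies the pseudo skew-adjointness relation L† = −N L N⁻¹, since N² = −1 and ∂_y commutes with N.) -/
attribute [local instance] Matrix.normedAddCommGroup Matrix.normedSpace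

/-- Partial derivative in the `a`-th coordinate direction on `ℝ³`. -/
noncomputable def pd3 {n : ℕ} (a : Fin 3) (f : (Fin 3 → ℝ) → Matrix (Fin n) (Fin n) ℂ)
    (x : Fin 3 → ℝ) : Matrix (Fin n) (Fin n) ℂ :=
  deriv (fun t => f (Function.update x a t)) (x a)

/-- The covariant derivative `D_a X = ∂_a X + [Abg_a, X]` in the background `Abg`. -/
noncomputable def Dcov {n : ℕ} (Abg : (Fin 3 → ℝ) → Fin 3 → Matrix (Fin n) (Fin n) ℂ)
    (a : Fin 3) (f : (Fin 3 → ℝ) → Matrix (Fin n) (Fin n) ℂ) (x : Fin 3 → ℝ) :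
    Matrix (Fin n) (Fin n) ℂ :=
  pd3 a f x + (Abg x a * f x - f x * Abg x a)

/-- The space of linearized fields `Ψ = (a, β, ϕ, γ)`. -/
abbrev Flds (n : ℕ) :=
  ((Fin 3 → ℝ) → Fin 3 → Matrix (Fin n) (Fin n) ℂ)
    × ((Fin 3 → ℝ) → Matrix (Fin n) (Fin n) ℂ)
    × ((Fin 3 → ℝ) → Fin 3 → Matrix (Fin n) (Fin n) ℂ)
    × ((Fin 3 → ℝ) → Matrix (Fin n) (Fin n) ℂ)

/-- The zeroth-order (no `∂_y`) part `B` of the linearized gauge-fixed KW operator around a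
background `(Abg, phibg)` with `A_y = φ_y = 0`: `BΨ = (P, Q, R, S)` with
`P_a = −D_aγ − [β,phibg_a] − Σ ε_{abc}(D_bϕ_c + [a_b,phibg_c])`,
`Q = Σ D_aϕ_a − Σ [phibg_a, a_a]`,
`R_a = [γ,phibg_a] − D_aβ − Σ ε_{abc} D_b a_c + Σ ε_{abc} [phibg_b, ϕ_c]`,
`S = Σ D_a a_a + Σ [phibg_a, ϕ_a]`. -/
noncomputable def Bop {n : ℕ} (Abg phibg : (Fin 3 → ℝ) → Fin 3 → Matrix (Fin n) (Fin n) ℂ)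
    (Ψ : Flds n) : Flds n :=
  ( fun x a =>
      -Dcov Abg a Ψ.2.2.2 x - (Ψ.2.1 x * phibg x a - phibg x a * Ψ.2.1 x)
        - ∑ b, ∑ c, eps3 a b c •
            (Dcov Abg b (fun x => Ψ.2.2.1 x c) x + (Ψ.1 x b * phibg x c - phibg x c * Ψ.1 x b)),
    fun x =>
      (∑ a, Dcov Abg a (fun x => Ψ.2.2.1 x a) x)
        - ∑ a, (phibg x a * Ψ.1 x a - Ψ.1 x a * phibg x a),
    fun x a =>
      (Ψ.2.2.2 x * phibg x a - phibg x a * Ψ.2.2.2 x) - Dcov Abg a Ψ.2.1 x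
        - (∑ b, ∑ c, eps3 a b c • Dcov Abg b (fun x => Ψ.1 x c) x)
        + ∑ b, ∑ c, eps3 a b c • (phibg x b * Ψ.2.2.1 x c - Ψ.2.2.1 x c * phibg x b),
    fun x =>
      (∑ a, Dcov Abg a (fun x => Ψ.1 x a) x)
        + ∑ a, (phibg x a * Ψ.2.2.1 x a - Ψ.2.2.1 x a * phibg x a) )

/-- The linear map `N(a, β, ϕ, γ) = (ϕ, γ, −a, −β)`. -/
def Nop {n : ℕ} (Ψ : Flds n) : Flds n :=
  (Ψ.2.2.1, Ψ.2.2.2, -Ψ.1, -Ψ.2.1)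

/-!
The operator `N` exchanges `(a, β)` with `(ϕ, γ)` up to a sign, and `B` respects this exchange for
purely algebraic reasons. In the first-order part of `B`, signs pass through each `D_a` because it
is odd. The zeroth-order part compares `ϕ × Φ` with `Φ × ϕ`, where `Φ` is the background and
`(u × v)_a = Σ ε_{abc} [u_b, v_c]`; this product is symmetric, because the sign of `ε` under `b ↔ c`
cancels the sign of the bracket under exchange of its arguments.
-/

section KWOperator

variable {R X ι L : Type*}

section AddCommGroup

variable [Ring R] [Fintype ι] [AddCommGroup L] [Module R L]

/-- The divergence `Σ D_a v_a` of a vector field, for arbitrary operators `D_a` on scalar fields in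
place of covariant derivatives. -/
def covDiv (D : ι → (X → L) → X → L) (v : X → ι → L) (x : X) : L :=
  ∑ a, D a (fun y => v y a) x

/-- The curl `(curl v)_a = Σ ε_{abc} D_b v_c` of a vector field, for arbitrary operators `D_b` on
scalar fields in place of covariant derivatives and an arbitrary system of coefficients `ε`. -/
def covCurl (ε : ι → ι → ι → R) (D : ι → (X → L) → X → L) (v : X → ι → L) (x : X) (a : ι) : L :=
  ∑ b, ∑ c, ε a b c • D b (fun y => v y c) x

theorem covDiv_odd {D : ι → (X → L) → X → L} (hD : ∀ a, (D a).Odd) : (covDiv D).Odd := by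
  intro v
  funext x
  calc ∑ a, D a (-fun y => v y a) x
      = ∑ a, -D a (fun y => v y a) x := by simp only [hD _ _, Pi.neg_apply]
    _ = -∑ a, D a (fun y => v y a) x := Finset.sum_neg_distrib _

theorem covCurl_odd (ε : ι → ι → ι → R) {D : ι → (X → L) → X → L} (hD : ∀ a, (D a).Odd) :
    (covCurl ε D).Odd := by
  intro v
  funext x a
  calc ∑ b, ∑ c, ε a b c • D b (-fun y => v y c) x
      = ∑ b, ∑ c, -(ε a b c • D b (fun y => v y c) x) := by
        simp only [hD _ _, Pi.neg_apply, smul_neg]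
    _ = -∑ b, ∑ c, ε a b c • D b (fun y => v y c) x := by simp only [Finset.sum_neg_distrib]

end AddCommGroup

/-- Linearized fields `(a, β, ϕ, γ)` on a space `X`, with values in `L` and vector indices in `ι`;
`Flds n` is the case `X = ℝ³`, `ι = Fin 3`, `L = Matrix (Fin n) (Fin n) ℂ`. -/
abbrev KWFields (X ι L : Type*) :=
  (X → ι → L) × (X → L) × (X → ι → L) × (X → L)

/-- The map `N(a, β, ϕ, γ) = (ϕ, γ, -a, -β)` on fields with values in `L`. -/
def kwRotation [Neg L] (Ψ : KWFields X ι L) : KWFields X ι L :=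
  let (a, β, ϕ, γ) := Ψ
  (ϕ, γ, -a, -β)

section LieRing

variable [Ring R] [Fintype ι] [LieRing L] [Module R L]

/-- The cross product `(u × v)_a = Σ ε_{abc} [u_b, v_c]` of vectors with entries in a Lie ring, for
an arbitrary system of coefficients `ε`. -/
def lieCross (ε : ι → ι → ι → R) (u v : ι → L) (a : ι) : L :=
  ∑ b, ∑ c, ε a b c • ⁅u b, v c⁆

theorem lieCross_comm {ε : ι → ι → ι → R} (hε : ∀ a b c, ε a c b = -ε a b c) (u v : ι → L) :
    lieCross ε u v = lieCross ε v u := by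
  funext a
  calc ∑ b, ∑ c, ε a b c • ⁅u b, v c⁆
      = ∑ c, ∑ b, ε a b c • ⁅u b, v c⁆ := Finset.sum_comm
    _ = ∑ c, ∑ b, ε a c b • ⁅v c, u b⁆ := by
      refine Finset.sum_congr rfl fun c _ => Finset.sum_congr rfl fun b _ => ?_
      rw [hε, ← lie_skew (v c), neg_smul, smul_neg]

theorem lieCross_neg_right (ε : ι → ι → ι → R) (u v : ι → L) :
    lieCross ε u (-v) = -lieCross ε u v := by
  funext a
  simp only [lieCross, Pi.neg_apply, lie_neg, smul_neg, Finset.sum_neg_distrib]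

/-- The operator `B` for fields with values in a Lie ring, with arbitrary coefficients `ε` in place
of the Levi-Civita symbol and arbitrary operators `D_a` in place of covariant derivatives. -/
def kwOperator (ε : ι → ι → ι → R) (D : ι → (X → L) → X → L) (Φ : X → ι → L)
    (Ψ : KWFields X ι L) : KWFields X ι L :=
  let (a, β, ϕ, γ) := Ψ
  (fun x i => -D i γ x - ⁅β x, Φ x i⁆ - (covCurl ε D ϕ x i + lieCross ε (a x) (Φ x) i),
    fun x => covDiv D ϕ x - ∑ i, ⁅Φ x i, a x i⁆,
    fun x i => ⁅γ x, Φ x i⁆ - D i β x - covCurl ε D a x i + lieCross ε (Φ x) (ϕ x) i,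
    fun x => covDiv D a x + ∑ i, ⁅Φ x i, ϕ x i⁆)

theorem pseudo_skew_adjointness_general {ε : ι → ι → ι → R} (hε : ∀ a b c, ε a c b = -ε a b c)
    {D : ι → (X → L) → X → L} (hD : ∀ a, (D a).Odd) (Φ : X → ι → L) (Ψ : KWFields X ι L) :
    kwOperator ε D Φ (kwRotation Ψ) = -kwRotation (kwOperator ε D Φ Ψ) := by
  obtain ⟨a, β, ϕ, γ⟩ := Ψ
  refine Prod.ext ?_ (Prod.ext ?_ (Prod.ext ?_ ?_)) <;>
    simp only [kwOperator, kwRotation, Prod.fst_neg, Prod.snd_neg]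
  · funext x i
    simp only [hD i β, covCurl_odd ε hD a, lieCross_comm hε (ϕ x) (Φ x), Pi.neg_apply]
    abel
  · funext x
    simp only [covDiv_odd hD a, Pi.neg_apply]
    abel
  · funext x i
    simp only [lieCross_neg_right, lieCross_comm hε (Φ x) (a x), Pi.neg_apply, neg_lie]
    abel
  · funext x
    simp only [Pi.neg_apply, lie_neg, Finset.sum_neg_distrib]
    abel

end LieRing

end KWOperator

theorem eps3_swap_right (a b c : Fin 3) : eps3 a c b = -eps3 a b c := by
  simp only [eps3]
  push_cast
  ring

section Matrix

variable {n : ℕ}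

theorem pd3_odd (a : Fin 3) : (pd3 (n := n) a).Odd :=
  fun _ => funext fun _ => deriv.fun_neg

theorem Dcov_odd (Abg : (Fin 3 → ℝ) → Fin 3 → Matrix (Fin n) (Fin n) ℂ) (a : Fin 3) :
    (Dcov Abg a).Odd := by
  intro f
  funext x
  simp only [Dcov, pd3_odd a f, Pi.neg_apply, mul_neg, neg_mul]
  abel

attribute [local instance] LieRing.ofAssociativeRing

theorem Bop_eq_kwOperator (Abg phibg : (Fin 3 → ℝ) → Fin 3 → Matrix (Fin n) (Fin n) ℂ)
    (Ψ : Flds n) : Bop Abg phibg Ψ = kwOperator eps3 (Dcov Abg) phibg Ψ := by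
  simp only [Bop, kwOperator, covCurl, covDiv, lieCross, Ring.lie_def, smul_add,
    Finset.sum_add_distrib]

theorem Nop_eq_kwRotation (Ψ : Flds n) : Nop Ψ = kwRotation Ψ :=
  rfl

theorem Bop_Nop (Abg phibg : (Fin 3 → ℝ) → Fin 3 → Matrix (Fin n) (Fin n) ℂ) (Ψ : Flds n) :
    Bop Abg phibg (Nop Ψ) = -Nop (Bop Abg phibg Ψ) := by
  simp only [Bop_eq_kwOperator, Nop_eq_kwRotation]
  exact pseudo_skew_adjointness_general eps3_swap_right (Dcov_odd Abg) phibg Ψ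

end Matrix

/-- Pseudo skew-adjointness: `B(NΨ) = −N(BΨ)` for every differentiable `Ψ`. Hence the
linearized gauge-fixed KW operator `L = ∂_y + B` around any background with
`φ_y = A_y = 0` satisfies `L† = −N L N⁻¹` (since `N² = −1` and `∂_y` commutes with `N`). -/
theorem pseudo_skew_adjointness {n : ℕ} (U : Set (Fin 3 → ℝ)) (hU : IsOpen U)
    (Abg phibg : (Fin 3 → ℝ) → Fin 3 → Matrix (Fin n) (Fin n) ℂ)
    (Ψ : Flds n)
    (hdiff : ∀ x ∈ U,
      (∀ c, DifferentiableAt ℝ (fun x => Ψ.1 x c) x)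
        ∧ DifferentiableAt ℝ Ψ.2.1 x
        ∧ (∀ c, DifferentiableAt ℝ (fun x => Ψ.2.2.1 x c) x)
        ∧ DifferentiableAt ℝ Ψ.2.2.2 x) :
    ∀ x ∈ U,
      (∀ a, (Bop Abg phibg (Nop Ψ)).1 x a = (-(Nop (Bop Abg phibg Ψ)).1) x a)
        ∧ (Bop Abg phibg (Nop Ψ)).2.1 x = (-(Nop (Bop Abg phibg Ψ)).2.1) x
        ∧ (∀ a, (Bop Abg phibg (Nop Ψ)).2.2.1 x a = (-(Nop (Bop Abg phibg Ψ)).2.2.1) x a)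
        ∧ (Bop Abg phibg (Nop Ψ)).2.2.2 x = (-(Nop (Bop Abg phibg Ψ)).2.2.2) x := by
  intro x _
  rw [Bop_Nop]
  exact ⟨fun _ => rfl, rfl, fun _ => rfl, rfl⟩
end
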